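/- Let E be a G-invariant Lebesgue-measurable subset of ℝ^d and let u be κ-harmonic in ℝ^{d+1}₊. If u is non-tangentially bounded at (x,0) for every x ∈ E, then there exists a subset E₀ ⊆ E with |E \ E₀| = 0 (Lebesgue measure) such that for every a > 0 and every x ∈ E₀, u(t,y) converges to a finite limit as (t,y) ∈ Γ_a(x) tends to (x,0). -/

import Mathlib

/-!
The square root `w` of the Dunkl weight removes the first-order part of the Dunkl Laplacian: for
`κ`-harmonic `u`,
`Δ(wu) = 2w ∑ κ(α)(u - u ∘ σ_α)/⟨α,x⟩² + uΔw`.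
Since `u` is also bounded in a cone at each reflected point `σ_α x`, and almost every point is
regular, `v = wu` and `Δv` are bounded in a cone at almost every `x ∈ E`. It remains to apply a
local Fatou theorem of Calderón type to `v` and to divide by `w`.

For that theorem, let `|v|, |Δv| ≤ M` on the sawtooth region over a measurable set `F`. The maximum
principle compares `v(·, · + s)` with the Poisson integral of the slice of `v` at height `s`; their
difference is at most a multiple of `P[1_{N \ F}]`, where `N` is a neighbourhood of `F`, plus a
linear and a quadratic term in `y`: these control the lateral boundary, the top and `Δv`
respectively. A weak limit of the slices as `s → 0` yields `φ` with `|v - P[φ]|` below this barrier.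
By Fatou's theorem for Poisson integrals, `P[φ]` has non-tangential limits almost everywhere, while
`P[1_{N \ F}]`, and with it the barrier, tends to `0` in every cone at almost every point of `F`.
Cones of large aperture cause no trouble: near `F`, `P[1_{N \ F}]` is bounded below off the sawtooth
region, so every cone at such a point eventually lies in that region.
-/

open MeasureTheory Filter Metric
open scoped RealInnerProductSpace Topology

noncomputable section

/-- Euclidean space `ℝ^d`. -/
abbrev Ed (d : ℕ) : Type := EuclideanSpace ℝ (Fin d)

/-- The reflection `σ_α(x) = x - ⟨α,x⟩α` (for roots normalized by `⟨α,α⟩ = 2`). -/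
def reflAt {d : ℕ} (α x : Ed d) : Ed d := x - ⟪α, x⟫ • α

/-- The reflection group `G` generated by the reflections `σ_α`, `α ∈ R`, realized as the
submonoid of self-maps of `ℝ^d` generated by the reflections (each reflection is an
involution, so this is in fact a group of transformations). -/
def dunklGroup {d : ℕ} (R : Finset (Ed d)) : Submonoid (Function.End (Ed d)) :=
  Submonoid.closure {f : Function.End (Ed d) | ∃ α ∈ R, f = reflAt α}

/-- A (normalized) root system `R` with positive subsystem `Rp` and
`G`-invariant nonnegative multiplicity function `κ`. -/
structure IsRootSystem {d : ℕ} (R Rp : Finset (Ed d)) (κ : Ed d → ℝ) : Prop where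
  nonzero : ∀ α ∈ R, α ≠ (0 : Ed d)
  norm_two : ∀ α ∈ R, ⟪α, α⟫ = (2 : ℝ)
  refl_mem : ∀ α ∈ R, ∀ β ∈ R, reflAt α β ∈ R
  pos_sub : Rp ⊆ R
  pos_split : ∀ α ∈ R, (α ∈ Rp ∧ ¬(-α ∈ Rp)) ∨ (¬(α ∈ Rp) ∧ -α ∈ Rp)
  kappa_nonneg : ∀ α ∈ R, 0 ≤ κ α
  kappa_inv : ∀ σ ∈ dunklGroup R, ∀ α ∈ R, κ (σ α) = κ α

/-- `x ∈ ℝ^d` is regular if `⟨α,x⟩ ≠ 0` for all roots `α ∈ R`. -/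
def isRegular {d : ℕ} (R : Finset (Ed d)) (x : Ed d) : Prop :=
  ∀ α ∈ R, ⟪α, x⟫ ≠ (0 : ℝ)

/-- Second directional derivative of `u` at `p` in direction `v`. -/
def pd2 {d : ℕ} (u : Ed d × ℝ → ℝ) (p v : Ed d × ℝ) : ℝ :=
  fderiv ℝ (fun q => fderiv ℝ u q v) p v

/-- The Euclidean Laplacian on `ℝ^{d+1} = ℝ^d × ℝ`. -/
def lapE {d : ℕ} (u : Ed d × ℝ → ℝ) (p : Ed d × ℝ) : ℝ :=
  (∑ i : Fin d, pd2 u p (EuclideanSpace.single i 1, 0)) + pd2 u p (0, 1)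

/-- The Dunkl Laplacian `Δ_κ` on `ℝ^{d+1}` (the Dunkl operators act in the `x`-variables). -/
def dunklLap {d : ℕ} (Rp : Finset (Ed d)) (κ : Ed d → ℝ) (u : Ed d × ℝ → ℝ)
    (p : Ed d × ℝ) : ℝ :=
  lapE u p + 2 * ∑ α ∈ Rp, κ α *
    (fderiv ℝ u p (α, 0) / ⟪α, p.1⟫ - (u p - u (reflAt α p.1, p.2)) / ⟪α, p.1⟫ ^ 2)

/-- The open upper half-space `ℝ^{d+1}₊`. -/
def upperHS (d : ℕ) : Set (Ed d × ℝ) := {p | 0 < p.2}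

/-- `u` is `κ`-harmonic on `Ω`: `u` is `C²` on `Ω` and `Δ_κ u = 0` at every point of `Ω`
whose `x`-coordinate is regular. -/
def KHarmonicOn {d : ℕ} (R Rp : Finset (Ed d)) (κ : Ed d → ℝ) (u : Ed d × ℝ → ℝ)
    (Ω : Set (Ed d × ℝ)) : Prop :=
  ContDiffOn ℝ 2 u Ω ∧ ∀ p ∈ Ω, isRegular R p.1 → dunklLap Rp κ u p = 0

/-- The cone `Γ_a(x)` of aperture `a` with vertex `(x,0)`. -/
def cone {d : ℕ} (a : ℝ) (x : Ed d) : Set (Ed d × ℝ) :=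
  {p | 0 < p.2 ∧ dist p.1 x < a * p.2}

/-- The truncated cone `Γ_a^h(x)`. -/
def coneT {d : ℕ} (a h : ℝ) (x : Ed d) : Set (Ed d × ℝ) :=
  {p | 0 < p.2 ∧ p.2 < h ∧ dist p.1 x < a * p.2}

/-- `u` has a finite non-tangential limit at `(x,0)`. -/
def HasNTLimit {d : ℕ} (u : Ed d × ℝ → ℝ) (x : Ed d) : Prop :=
  ∀ a > (0 : ℝ), ∃ L : ℝ, Tendsto u (𝓝[cone a x] (x, (0 : ℝ))) (𝓝 L)

/-- `u` is non-tangentially bounded at `(x,0)`. -/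
def NTBounded {d : ℕ} (u : Ed d × ℝ → ℝ) (x : Ed d) : Prop :=
  ∃ a > (0 : ℝ), ∃ h > (0 : ℝ), ∃ M : ℝ, ∀ p ∈ coneT a h x, |u p| ≤ M

/-- A subset of `ℝ^d` is `G`-invariant. -/
def GInvSet {d : ℕ} (R : Finset (Ed d)) (E : Set (Ed d)) : Prop :=
  ∀ σ ∈ dunklGroup R, σ '' E = E

/-! ### Second derivatives and the Laplacian -/

section SecondDerivative

variable {E : Type*} [NormedAddCommGroup E] [NormedSpace ℝ E] {f g : E → ℝ} {p : E}

lemma differentiableAt_fderiv_apply (hf : ContDiffAt ℝ 2 f p) (v : E) :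
    DifferentiableAt ℝ (fun q => fderiv ℝ f q v) p :=
  ((hf.fderiv_right (m := 1) (by norm_num)).differentiableAt one_ne_zero).clm_apply
    (differentiableAt_const v)

lemma eventually_differentiableAt (hf : ContDiffAt ℝ 2 f p) :
    ∀ᶠ q in 𝓝 p, DifferentiableAt ℝ f q := by
  filter_upwards [hf.eventually (by simp)] with q hq using hq.differentiableAt two_ne_zero

lemma deriv_deriv_nonpos_of_isLocalMax {φ : ℝ → ℝ} {x : ℝ} (hφ : ContinuousAt φ x)
    (hmax : IsLocalMax φ x) : deriv (deriv φ) x ≤ 0 := by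
  by_contra! hpos
  have hmin := isLocalMin_of_deriv_deriv_pos hpos hmax.deriv_eq_zero hφ
  have hconst : φ =ᶠ[𝓝 x] fun _ => φ x := by
    filter_upwards [hmax, hmin] with t h₁ h₂ using le_antisymm h₁ h₂
  rw [hconst.deriv.deriv_eq] at hpos
  simp at hpos

lemma fderiv_fderiv_apply_eq_deriv_deriv (hf : ContDiffAt ℝ 2 f p) (v : E) :
    fderiv ℝ (fun q => fderiv ℝ f q v) p v = deriv (deriv fun τ : ℝ => f (p + τ • v)) 0 := by
  have hline (τ : ℝ) : HasDerivAt (fun τ : ℝ => p + τ • v) v τ := by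
    simpa using ((hasDerivAt_id τ).smul_const v).const_add p
  have hlim : Tendsto (fun τ : ℝ => p + τ • v) (𝓝 0) (𝓝 p) := by
    simpa using (hline 0).continuousAt.tendsto
  have hfirst : deriv (fun τ : ℝ => f (p + τ • v)) =ᶠ[𝓝 0] fun τ => fderiv ℝ f (p + τ • v) v := by
    filter_upwards [hlim.eventually (eventually_differentiableAt hf)] with τ hτ
    exact (hτ.hasFDerivAt.comp_hasDerivAt τ (hline τ)).deriv
  have hsecond : HasFDerivAt (fun q => fderiv ℝ f q v) (fderiv ℝ (fun q => fderiv ℝ f q v) p)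
      (p + (0 : ℝ) • v) := by
    simpa using (differentiableAt_fderiv_apply hf v).hasFDerivAt
  rw [hfirst.deriv_eq]
  exact (hsecond.comp_hasDerivAt (0 : ℝ) (hline 0)).deriv.symm

lemma fderiv_fderiv_apply_nonpos_of_isLocalMax (hf : ContDiffAt ℝ 2 f p) (hmax : IsLocalMax f p)
    (v : E) : fderiv ℝ (fun q => fderiv ℝ f q v) p v ≤ 0 := by
  have hline : ContinuousAt (fun τ : ℝ => p + τ • v) 0 := by fun_prop
  have hp : p + (0 : ℝ) • v = p := by simp
  rw [fderiv_fderiv_apply_eq_deriv_deriv hf]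
  rw [← hp] at hf hmax
  exact deriv_deriv_nonpos_of_isLocalMax (ContinuousAt.comp hf.continuousAt hline)
    (hline.eventually hmax)

lemma fderiv_fderiv_apply_add (hf : ContDiffAt ℝ 2 f p) (hg : ContDiffAt ℝ 2 g p) (v w : E) :
    fderiv ℝ (fun q => fderiv ℝ (f + g) q v) p w =
      fderiv ℝ (fun q => fderiv ℝ f q v) p w + fderiv ℝ (fun q => fderiv ℝ g q v) p w := by
  have hfirst : (fun q => fderiv ℝ (f + g) q v)
      =ᶠ[𝓝 p] (fun q => fderiv ℝ f q v) + fun q => fderiv ℝ g q v := by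
    filter_upwards [eventually_differentiableAt hf, eventually_differentiableAt hg] with q h₁ h₂
    simp [fderiv_add h₁ h₂]
  rw [hfirst.fderiv_eq, fderiv_add (differentiableAt_fderiv_apply hf v)
    (differentiableAt_fderiv_apply hg v), add_apply]

lemma fderiv_fderiv_apply_mul (hf : ContDiffAt ℝ 2 f p) (hg : ContDiffAt ℝ 2 g p) (v w : E) :
    fderiv ℝ (fun q => fderiv ℝ (f * g) q v) p w =
      f p * fderiv ℝ (fun q => fderiv ℝ g q v) p w +
        (fderiv ℝ f p w * fderiv ℝ g p v + fderiv ℝ f p v * fderiv ℝ g p w) +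
        g p * fderiv ℝ (fun q => fderiv ℝ f q v) p w := by
  have hfirst : (fun q => fderiv ℝ (f * g) q v)
      =ᶠ[𝓝 p] f * (fun q => fderiv ℝ g q v) + g * fun q => fderiv ℝ f q v := by
    filter_upwards [eventually_differentiableAt hf, eventually_differentiableAt hg] with q h₁ h₂
    simp [fderiv_mul h₁ h₂]
  have hf' := hf.differentiableAt two_ne_zero
  have hg' := hg.differentiableAt two_ne_zero
  have hfv := differentiableAt_fderiv_apply hf v
  have hgv := differentiableAt_fderiv_apply hg v
  rw [hfirst.fderiv_eq, fderiv_add (hf'.mul hgv) (hg'.mul hfv), fderiv_mul hf' hgv,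
    fderiv_mul hg' hfv]
  simp only [add_apply, smul_apply, smul_eq_mul]
  ring

end SecondDerivative

section Laplacian

variable {d : ℕ} {f g : Ed d × ℝ → ℝ} {p : Ed d × ℝ}

/-- The pointwise scalar product `⟨∇f, ∇g⟩` of the Euclidean gradients of two functions on
`ℝ^{d+1}`, which is the cross term of the Laplacian of a product. -/
def gradDot (f g : Ed d × ℝ → ℝ) (p : Ed d × ℝ) : ℝ :=
  ∑ i, fderiv ℝ f p (EuclideanSpace.single i 1, 0) * fderiv ℝ g p (EuclideanSpace.single i 1, 0) +
    fderiv ℝ f p (0, 1) * fderiv ℝ g p (0, 1)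

lemma lapE_nonpos_of_isLocalMax (hf : ContDiffAt ℝ 2 f p) (hmax : IsLocalMax f p) :
    lapE f p ≤ 0 :=
  add_nonpos
    (Finset.sum_nonpos fun _ _ => fderiv_fderiv_apply_nonpos_of_isLocalMax hf hmax _)
    (fderiv_fderiv_apply_nonpos_of_isLocalMax hf hmax _)

lemma lapE_add (hf : ContDiffAt ℝ 2 f p) (hg : ContDiffAt ℝ 2 g p) :
    lapE (f + g) p = lapE f p + lapE g p := by
  simp only [lapE, pd2, fderiv_fderiv_apply_add hf hg, Finset.sum_add_distrib]
  ring

lemma lapE_mul (hf : ContDiffAt ℝ 2 f p) (hg : ContDiffAt ℝ 2 g p) :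
    lapE (f * g) p = f p * lapE g p + 2 * gradDot f g p + g p * lapE f p := by
  simp only [lapE, gradDot, pd2, fderiv_fderiv_apply_mul hf hg, Finset.sum_add_distrib,
    mul_add, ← Finset.mul_sum]
  ring

lemma lapE_const_smul (hf : ContDiffAt ℝ 2 f p) (c : ℝ) : lapE (c • f) p = c * lapE f p := by
  have h := lapE_mul (f := fun _ => c) contDiffAt_const hf
  have hsmul : (fun _ => c) * f = c • f := rfl
  rw [hsmul] at h
  simpa [lapE, pd2, gradDot] using h

lemma lapE_neg (f : Ed d × ℝ → ℝ) (p : Ed d × ℝ) : lapE (-f) p = -lapE f p := by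
  have hpd2 (v : Ed d × ℝ) : pd2 (-f) p v = -pd2 f p v := by
    simp only [pd2, fderiv_neg, neg_apply, fderiv_fun_neg]
  simp only [lapE, hpd2, Finset.sum_neg_distrib]
  ring

lemma lapE_sub (hf : ContDiffAt ℝ 2 f p) (hg : ContDiffAt ℝ 2 g p) :
    lapE (f - g) p = lapE f p - lapE g p := by
  rw [sub_eq_add_neg f g, lapE_add (g := -g) hf hg.neg, lapE_neg, ← sub_eq_add_neg]

lemma lapE_comp_add_right (f : Ed d × ℝ → ℝ) (w p : Ed d × ℝ) :
    lapE (fun q => f (q + w)) p = lapE f (p + w) := by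
  have hfirst (v q : Ed d × ℝ) : fderiv ℝ (fun q => f (q + w)) q v = fderiv ℝ f (q + w) v := by
    rw [fderiv_comp_add_right]
  have hsecond (v : Ed d × ℝ) :=
    fderiv_comp_add_right (f := fun q => fderiv ℝ f q v) (x := p) (𝕜 := ℝ) w
  simp only [lapE, pd2, hfirst, hsecond]

lemma lapE_comp_snd {φ : ℝ → ℝ} (hφ : ContDiff ℝ 2 φ) (p : Ed d × ℝ) :
    lapE (fun q : Ed d × ℝ => φ q.2) p = deriv (deriv φ) p.2 := by
  have hcomp {ψ : ℝ → ℝ} (hψ : Differentiable ℝ ψ) (q v : Ed d × ℝ) :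
      fderiv ℝ (fun q : Ed d × ℝ => ψ q.2) q v = deriv ψ q.2 * v.2 := by
    have h : HasFDerivAt (fun q : Ed d × ℝ => ψ q.2)
        (deriv ψ q.2 • ContinuousLinearMap.snd ℝ (Ed d) ℝ) q :=
      (hψ q.2).hasDerivAt.comp_hasFDerivAt q hasFDerivAt_snd
    simp [h.fderiv]
  have hpd2 (v : Ed d × ℝ) :
      pd2 (fun q : Ed d × ℝ => φ q.2) p v = deriv (deriv φ) p.2 * v.2 * v.2 := by
    simp only [pd2, hcomp (hφ.differentiable two_ne_zero)]
    rw [hcomp (hφ.differentiable_deriv_two.mul_const v.2), deriv_mul_const_field]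
  simp [lapE, hpd2]

lemma continuousAt_lapE (hf : ContDiffAt ℝ 2 f p) : ContinuousAt (lapE f) p := by
  have hpd2 (v : Ed d × ℝ) : ContinuousAt (fun q => pd2 f q v) p :=
    ((((hf.fderiv_right (m := 1) (by norm_num)).clm_apply contDiffAt_const).fderiv_right
      (m := 0) (by norm_num)).clm_apply contDiffAt_const).continuousAt
  exact (tendsto_finsetSum _ fun i _ => hpd2 _).add (hpd2 _)

end Laplacian

/-! ### The maximum principle -/

lemma isCompact_superlevel_of_frontier {X : Type*} [PseudoMetricSpace X] [ProperSpace X] {Ω : Set X}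
    {f : X → ℝ} {b c : ℝ} (hΩ : Bornology.IsBounded Ω) (hf : ContinuousOn f Ω)
    (hbd : ∀ p ∈ closure Ω \ Ω, ∀ B > b, ∀ᶠ q in 𝓝[Ω] p, f q < B) (hc : b < c) :
    IsCompact {q ∈ Ω | c ≤ f q} := by
  refine Metric.isCompact_of_isClosed_isBounded ?_ (hΩ.subset fun q hq => hq.1)
  rw [← isSeqClosed_iff_isClosed]
  intro s q hs hq
  have hqcl : q ∈ closure Ω := mem_closure_of_tendsto hq (.of_forall fun n => (hs n).1)
  have hqΩ : Tendsto s atTop (𝓝[Ω] q) :=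
    tendsto_nhdsWithin_iff.2 ⟨hq, .of_forall fun n => (hs n).1⟩
  by_cases hmem : q ∈ Ω
  · exact ⟨hmem, ge_of_tendsto ((hf q hmem).tendsto.comp hqΩ) (.of_forall fun n => (hs n).2)⟩
  · obtain ⟨n, hn⟩ := (hqΩ.eventually (hbd q ⟨hqcl, hmem⟩ c hc)).exists
    exact absurd (hs n).2 hn.not_ge

lemma le_of_lapE_pos {d : ℕ} {Ω : Set (Ed d × ℝ)} (hΩ : IsOpen Ω) (hbdd : Bornology.IsBounded Ω)
    {f : Ed d × ℝ → ℝ} {b : ℝ} (hf : ContDiffOn ℝ 2 f Ω) (hlap : ∀ p ∈ Ω, 0 < lapE f p)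
    (hbd : ∀ p ∈ closure Ω \ Ω, ∀ B > b, ∀ᶠ q in 𝓝[Ω] p, f q < B) {p : Ed d × ℝ} (hp : p ∈ Ω) :
    f p ≤ b := by
  by_contra! hpb
  obtain ⟨q, ⟨hqΩ, hpq⟩, hmax⟩ :=
    (isCompact_superlevel_of_frontier hbdd hf.continuousOn hbd hpb).exists_isMaxOn
      ⟨p, hp, le_rfl⟩ (hf.continuousOn.mono fun _ hz => hz.1)
  have hloc : IsLocalMax f q := by
    filter_upwards [hΩ.mem_nhds hqΩ] with z hz
    by_cases h : f p ≤ f z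
    · exact hmax ⟨hz, h⟩
    · exact (not_le.1 h).le.trans hpq
  exact (lapE_nonpos_of_isLocalMax (hf.contDiffAt (hΩ.mem_nhds hqΩ)) hloc).not_gt (hlap q hqΩ)

/-! ### The Poisson kernel -/

section PoissonKernel

variable {d : ℕ} {p : Ed d × ℝ}

/-- The square of the Euclidean norm on `ℝ^{d+1}`; the norm of the product type `Ed d × ℝ` is the
supremum norm instead. -/
def euclideanSq (p : Ed d × ℝ) : ℝ := ‖p.1‖ ^ 2 + p.2 ^ 2

/-- The integral of `(1 + |t|²)^{-(d+1)/2}`, which normalizes the Poisson kernel. -/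
def poissonMass (d : ℕ) : ℝ := ∫ t : Ed d, (1 + ‖t‖ ^ 2) ^ (-((d : ℝ) + 1) / 2)

/-- The Poisson kernel `c_d y (|x|² + y²)^{-(d+1)/2}` of the upper half-space, normalized to have
integral one at every height. -/
def poissonKernelHS (d : ℕ) (p : Ed d × ℝ) : ℝ :=
  (poissonMass d)⁻¹ * (p.2 * euclideanSq p ^ (-((d : ℝ) + 1) / 2))

lemma isOpen_upperHS (d : ℕ) : IsOpen (upperHS d) := isOpen_lt continuous_const continuous_snd

lemma euclideanSq_pos (hp : p ∈ upperHS d) : 0 < euclideanSq p := by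
  have : 0 < p.2 := hp
  unfold euclideanSq
  positivity

lemma integrable_one_add_norm_sq_rpow (d : ℕ) :
    Integrable fun t : Ed d => (1 + ‖t‖ ^ 2) ^ (-((d : ℝ) + 1) / 2) :=
  integrable_rpow_neg_one_add_norm_sq (by simp)

lemma poissonMass_pos (d : ℕ) : 0 < poissonMass d :=
  integral_pos_of_integrable_nonneg_nonzero (x := 0)
    (.rpow_const (by fun_prop) fun t => .inl (by positivity : 1 + ‖t‖ ^ 2 ≠ 0))
    (integrable_one_add_norm_sq_rpow d) (fun t => by positivity) (by simp)

lemma poissonKernelHS_pos (hp : p ∈ upperHS d) : 0 < poissonKernelHS d p :=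
  mul_pos (inv_pos.2 (poissonMass_pos d))
    (mul_pos hp (Real.rpow_pos_of_pos (euclideanSq_pos hp) _))

lemma contDiff_euclideanSq {n : WithTop ℕ∞} : ContDiff ℝ n (euclideanSq (d := d)) :=
  (contDiff_fst.norm_sq ℝ).add (contDiff_snd.pow 2)

lemma contDiffAt_euclideanSq_rpow (hp : p ∈ upperHS d) (s : ℝ) {n : WithTop ℕ∞} :
    ContDiffAt ℝ n (fun q => euclideanSq q ^ s) p :=
  contDiff_euclideanSq.contDiffAt.rpow_const_of_ne (euclideanSq_pos hp).ne'

lemma contDiffOn_poissonKernelHS (d : ℕ) (n : WithTop ℕ∞) :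
    ContDiffOn ℝ n (poissonKernelHS d) (upperHS d) := fun _ hp =>
  (contDiffAt_const.mul
    (contDiffAt_snd.mul (contDiffAt_euclideanSq_rpow hp _))).contDiffWithinAt

lemma fderiv_euclideanSq_rpow_apply (hp : p ∈ upperHS d) (s : ℝ) (v : Ed d × ℝ) :
    fderiv ℝ (fun q => euclideanSq q ^ s) p v =
      2 * s * euclideanSq p ^ (s - 1) * (⟪p.1, v.1⟫ + p.2 * v.2) := by
  have hsq : HasFDerivAt (euclideanSq (d := d)) _ p :=
    hasFDerivAt_fst.norm_sq.add (HasFDerivAt.pow hasFDerivAt_snd 2)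
  rw [(hsq.rpow_const (p := s) (.inl (euclideanSq_pos hp).ne')).fderiv]
  simp only [Nat.add_one_sub_one, pow_one, nsmul_eq_mul, Nat.cast_ofNat, smul_add, add_apply,
    smul_apply, ContinuousLinearMap.comp_apply, ContinuousLinearMap.coe_fst', coe_innerSL_apply,
    smul_eq_mul, ContinuousLinearMap.coe_snd']
  ring

lemma pd2_euclideanSq_rpow (hp : p ∈ upperHS d) (s : ℝ) (v : Ed d × ℝ) :
    pd2 (fun q => euclideanSq q ^ s) p v =
      4 * s * (s - 1) * euclideanSq p ^ (s - 2) * (⟪p.1, v.1⟫ + p.2 * v.2) ^ 2 +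
        2 * s * euclideanSq p ^ (s - 1) * (‖v.1‖ ^ 2 + v.2 ^ 2) := by
  have hlin : HasFDerivAt (fun q : Ed d × ℝ => ⟪q.1, v.1⟫ + q.2 * v.2) _ p :=
    (hasFDerivAt_fst.inner ℝ (hasFDerivAt_const v.1 p)).add (hasFDerivAt_snd.mul_const v.2)
  have hpow := ((contDiffAt_euclideanSq_rpow hp (s - 1) (n := 1)).differentiableAt
    one_ne_zero).hasFDerivAt
  have hfirst : (fun q => fderiv ℝ (fun q => euclideanSq q ^ s) q v) =ᶠ[𝓝 p]
      fun q => 2 * s * (euclideanSq q ^ (s - 1) * (⟪q.1, v.1⟫ + q.2 * v.2)) := by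
    filter_upwards [(isOpen_upperHS d).mem_nhds hp] with q hq
    rw [fderiv_euclideanSq_rpow_apply hq]
    ring
  rw [pd2, hfirst.fderiv_eq, ((hpow.fun_mul hlin).const_mul (2 * s)).fderiv]
  simp only [smul_add, add_apply, smul_apply, ContinuousLinearMap.comp_apply,
    ContinuousLinearMap.prod_apply, ContinuousLinearMap.coe_fst', zero_apply, fderivInnerCLM_apply,
    inner_zero_right, inner_self_eq_norm_sq_to_K, Real.ringHom_apply, zero_add, smul_eq_mul,
    ContinuousLinearMap.coe_snd', fderiv_euclideanSq_rpow_apply hp]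
  ring_nf

lemma sum_inner_single_sq (x : Ed d) : ∑ i, ⟪x, EuclideanSpace.single i (1 : ℝ)⟫ ^ 2 = ‖x‖ ^ 2 := by
  simp [EuclideanSpace.inner_single_right, EuclideanSpace.norm_sq_eq]

lemma lapE_euclideanSq_rpow (hp : p ∈ upperHS d) (s : ℝ) :
    lapE (fun q => euclideanSq q ^ s) p =
      2 * s * (2 * s + d - 1) * euclideanSq p ^ (s - 1) := by
  have hpow : euclideanSq p ^ (s - 1) = euclideanSq p ^ (s - 2) * euclideanSq p := by
    rw [← Real.rpow_add_one (euclideanSq_pos hp).ne']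
    ring_nf
  simp only [lapE, pd2_euclideanSq_rpow hp, mul_zero, add_zero, inner_zero_right, zero_add, mul_one,
    Finset.sum_add_distrib, ← Finset.mul_sum, sum_inner_single_sq, PiLp.norm_single, norm_one,
    one_pow, norm_zero, zero_pow two_ne_zero, Finset.sum_const, Finset.card_univ, Fintype.card_fin,
    nsmul_eq_mul]
  rw [hpow, euclideanSq]
  ring

lemma lapE_poissonKernelHS (hp : p ∈ upperHS d) : lapE (poissonKernelHS d) p = 0 := by
  set s : ℝ := -((d : ℝ) + 1) / 2
  have hsnd : ContDiffAt ℝ 2 (Prod.snd : Ed d × ℝ → ℝ) p := contDiffAt_snd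
  have hpow := contDiffAt_euclideanSq_rpow hp s (n := 2)
  have hlapsnd : lapE (Prod.snd : Ed d × ℝ → ℝ) p = 0 := by
    simpa using lapE_comp_snd contDiff_id p
  have hdot : gradDot Prod.snd (fun q => euclideanSq q ^ s) p =
      2 * s * euclideanSq p ^ (s - 1) * p.2 := by
    simp [gradDot, fderiv_snd, fderiv_euclideanSq_rpow_apply hp]
  have hkernel : poissonKernelHS d = (poissonMass d)⁻¹ • (Prod.snd * fun q => euclideanSq q ^ s) :=
    rfl
  have hprod : ContDiffAt ℝ 2 (Prod.snd * fun q : Ed d × ℝ => euclideanSq q ^ s) p := hsnd.mul hpow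
  rw [hkernel, lapE_const_smul hprod, lapE_mul hsnd hpow, hlapsnd, hdot,
    lapE_euclideanSq_rpow hp]
  simp only [s]
  ring

end PoissonKernel

section PoissonBounds

variable {d : ℕ} {p q : Ed d × ℝ}

lemma sub_mem_upperHS (hp : p ∈ upperHS d) (t : Ed d) : p - (t, (0 : ℝ)) ∈ upperHS d := by
  simpa [upperHS] using hp

lemma prodMk_one_mem_upperHS (s : Ed d) : (s, (1 : ℝ)) ∈ upperHS d := one_pos (α := ℝ)

lemma poissonKernelHS_le_mul (hp : p ∈ upperHS d) (hpq : q.2 = p.2) {c : ℝ} (hc : 0 ≤ c)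
    (h : euclideanSq q ≤ c * euclideanSq p) :
    poissonKernelHS d p ≤ c ^ (((d : ℝ) + 1) / 2) * poissonKernelHS d q := by
  have hp' := euclideanSq_pos hp
  have hq' : 0 < euclideanSq q := euclideanSq_pos (by simpa [upperHS, hpq] using hp)
  have hpow : euclideanSq p ^ (-((d : ℝ) + 1) / 2) ≤
      c ^ (((d : ℝ) + 1) / 2) * euclideanSq q ^ (-((d : ℝ) + 1) / 2) := by
    have hmono := Real.rpow_le_rpow hq'.le h (by positivity : 0 ≤ ((d : ℝ) + 1) / 2)
    rw [Real.mul_rpow hc hp'.le] at hmono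
    rw [neg_div, Real.rpow_neg hp'.le, Real.rpow_neg hq'.le, ← div_eq_mul_inv,
      le_div_iff₀ (Real.rpow_pos_of_pos hq' _), inv_mul_le_iff₀ (Real.rpow_pos_of_pos hp' _)]
    linarith
  have hmass := (poissonMass_pos d).le
  have hy : 0 ≤ p.2 := le_of_lt hp
  calc poissonKernelHS d p
      ≤ (poissonMass d)⁻¹ *
          (p.2 * (c ^ (((d : ℝ) + 1) / 2) * euclideanSq q ^ (-((d : ℝ) + 1) / 2))) := by
        unfold poissonKernelHS
        gcongr
    _ = c ^ (((d : ℝ) + 1) / 2) * poissonKernelHS d q := by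
        rw [poissonKernelHS, hpq]
        ring

lemma sq_rpow_neg_add_one_div_two (d : ℕ) {r : ℝ} (hr : 0 ≤ r) :
    (r ^ 2) ^ (-((d : ℝ) + 1) / 2) = (r ^ (d + 1))⁻¹ := by
  rw [← Real.rpow_natCast r 2, ← Real.rpow_mul hr, ← Real.rpow_natCast r (d + 1),
    ← Real.rpow_neg hr]
  congr 1
  push_cast
  ring

lemma poissonKernelHS_le_of_sq_le (hp : p ∈ upperHS d) {r : ℝ} (hr : 0 < r)
    (h : r ^ 2 ≤ euclideanSq p) :
    poissonKernelHS d p ≤ (poissonMass d)⁻¹ * (p.2 * (r ^ (d + 1))⁻¹) := by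
  have hmass := (poissonMass_pos d).le
  have hy : 0 ≤ p.2 := le_of_lt hp
  have hexp : -((d : ℝ) + 1) / 2 ≤ 0 := by
    rw [neg_div]
    exact neg_nonpos.2 (by positivity)
  rw [poissonKernelHS, ← sq_rpow_neg_add_one_div_two d hr.le]
  gcongr ?_ * (?_ * ?_)
  exact Real.rpow_le_rpow_of_nonpos (by positivity) h hexp

lemma poissonKernelHS_smul (x : Ed d) {y : ℝ} (hy : 0 < y) :
    poissonKernelHS d (y⁻¹ • x, 1) = y ^ d * poissonKernelHS d (x, y) := by
  have hsq : euclideanSq (x, y) = y ^ 2 * euclideanSq (y⁻¹ • x, (1 : ℝ)) := by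
    simp only [euclideanSq, norm_smul, norm_inv, Real.norm_of_nonneg hy.le]
    field_simp
  have hnonneg := (euclideanSq_pos (prodMk_one_mem_upperHS (y⁻¹ • x))).le
  rw [poissonKernelHS, poissonKernelHS, hsq, Real.mul_rpow (by positivity) hnonneg,
    sq_rpow_neg_add_one_div_two d hy.le]
  field_simp
  ring

lemma poissonKernelHS_one (t : Ed d) :
    poissonKernelHS d (t, 1) = (poissonMass d)⁻¹ * (1 + ‖t‖ ^ 2) ^ (-((d : ℝ) + 1) / 2) := by
  simp [poissonKernelHS, euclideanSq, add_comm]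

lemma integrable_poissonKernelHS_one (d : ℕ) :
    Integrable fun t : Ed d => poissonKernelHS d (t, 1) := by
  simp only [poissonKernelHS_one]
  exact (integrable_one_add_norm_sq_rpow d).const_mul _

lemma integral_poissonKernelHS_one (d : ℕ) : ∫ t : Ed d, poissonKernelHS d (t, 1) = 1 := by
  simp only [poissonKernelHS_one, integral_const_mul]
  exact inv_mul_cancel₀ (poissonMass_pos d).ne'

end PoissonBounds

/-! ### Poisson integrals -/

section HorizontalConv

variable {d : ℕ} {G : Type*} [NormedAddCommGroup G] [NormedSpace ℝ G] {k : Ed d × ℝ → G}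
  {φ : Ed d → ℝ} {p : Ed d × ℝ}

/-- The convolution `∫ φ(t) k(x - t, y) dt` in the horizontal variable of a boundary density `φ`
with a kernel `k` on the upper half-space. Vector-valued kernels are allowed so that derivatives of
the kernel can be treated on the same footing. -/
def horizontalConv (k : Ed d × ℝ → G) (φ : Ed d → ℝ) (p : Ed d × ℝ) : G :=
  ∫ t, φ t • k (p - (t, 0))

lemma norm_smul_le_of_forall_mem_support {X : Type*} {φ : X → ℝ} {g : X → G} {C : ℝ}
    (h : ∀ t ∈ Function.support φ, ‖g t‖ ≤ C) (t : X) : ‖φ t • g t‖ ≤ ‖φ t‖ * C := by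
  rw [norm_smul]
  by_cases ht : t ∈ Function.support φ
  · gcongr
    exact h t ht
  · simp [Function.notMem_support.1 ht]

lemma integrable_smul_comp_sub (hk : ContinuousOn k (upperHS d)) (hφ : Integrable φ)
    (hsupp : Bornology.IsBounded (Function.support φ)) (hp : p ∈ upperHS d) :
    Integrable fun t => φ t • k (p - (t, (0 : ℝ))) := by
  have hshift : Continuous fun t : Ed d => k (p - (t, (0 : ℝ))) :=
    hk.comp_continuous (by fun_prop) (sub_mem_upperHS hp)
  obtain ⟨C, hC⟩ := hsupp.isCompact_closure.exists_bound_of_continuousOn hshift.continuousOn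
  exact (hφ.norm.mul_const C).mono' (hφ.aestronglyMeasurable.smul hshift.aestronglyMeasurable)
    (.of_forall (norm_smul_le_of_forall_mem_support fun t ht => hC t (subset_closure ht)))

lemma hasFDerivAt_horizontalConv (hk : ContDiffOn ℝ 1 k (upperHS d)) (hφ : Integrable φ)
    (hsupp : Bornology.IsBounded (Function.support φ)) (hp : p ∈ upperHS d) :
    HasFDerivAt (horizontalConv k φ) (horizontalConv (fderiv ℝ k) φ p) p := by
  have hU := isOpen_upperHS d
  have hk' : ContinuousOn (fderiv ℝ k) (upperHS d) := hk.continuousOn_fderiv_of_isOpen hU le_rfl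
  obtain ⟨ε, hε, hball⟩ := Metric.nhds_basis_closedBall.mem_iff.1 (hU.mem_nhds hp)
  have hcont : ContinuousOn (fun q : (Ed d × ℝ) × Ed d => fderiv ℝ k (q.1 - (q.2, (0 : ℝ))))
      (closedBall p ε ×ˢ closure (Function.support φ)) :=
    hk'.comp (by fun_prop) fun q hq => sub_mem_upperHS (hball hq.1) _
  obtain ⟨C, hC⟩ :=
    ((isCompact_closedBall p ε).prod hsupp.isCompact_closure).exists_bound_of_continuousOn hcont
  refine hasFDerivAt_integral_of_dominated_of_fderiv_le (bound := fun t => ‖φ t‖ * C)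
    (F' := fun q t => φ t • fderiv ℝ k (q - (t, (0 : ℝ))))
    (closedBall_mem_nhds p hε) ?_ (integrable_smul_comp_sub hk.continuousOn hφ hsupp hp)
    (integrable_smul_comp_sub hk' hφ hsupp hp).aestronglyMeasurable ?_ (hφ.norm.mul_const C) ?_
  · filter_upwards [hU.mem_nhds hp] with q hq
    exact (integrable_smul_comp_sub hk.continuousOn hφ hsupp hq).aestronglyMeasurable
  · exact .of_forall fun t q hq =>
      norm_smul_le_of_forall_mem_support (fun t ht => hC (q, t) ⟨hq, subset_closure ht⟩) t
  · refine .of_forall fun t q hq => ?_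
    have hkt : HasFDerivAt k (fderiv ℝ k (q - (t, (0 : ℝ)))) (q - (t, (0 : ℝ))) :=
      ((hk.contDiffAt (hU.mem_nhds (sub_mem_upperHS (hball hq) t))).differentiableAt
        one_ne_zero).hasFDerivAt
    exact ((hasFDerivAt_comp_sub (f := k) (t, (0 : ℝ))).2 hkt).const_smul (φ t)

lemma contDiffOn_horizontalConv (hφ : Integrable φ)
    (hsupp : Bornology.IsBounded (Function.support φ)) (n : ℕ)
    (hk : ContDiffOn ℝ (n + 1) k (upperHS d)) :
    ContDiffOn ℝ n (horizontalConv k φ) (upperHS d) := by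
  have hU := isOpen_upperHS d
  induction n generalizing G with
  | zero =>
    rw [Nat.cast_zero, zero_add] at hk
    rw [Nat.cast_zero, contDiffOn_zero]
    exact fun p hp => (hasFDerivAt_horizontalConv hk hφ hsupp hp).continuousAt.continuousWithinAt
  | succ n ih =>
    have hderiv {p} (hp : p ∈ upperHS d) :=
      hasFDerivAt_horizontalConv (hk.of_le (by simp)) hφ hsupp hp
    push_cast at hk ⊢
    rw [contDiffOn_succ_iff_fderiv_of_isOpen hU]
    exact ⟨fun p hp => (hderiv hp).differentiableAt.differentiableWithinAt, by simp,
      (ih (hk.fderiv_of_isOpen hU le_rfl)).congr fun p hp => (hderiv hp).fderiv⟩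

lemma fderiv_horizontalConv_apply [CompleteSpace G] (hk : ContDiffOn ℝ 1 k (upperHS d))
    (hφ : Integrable φ) (hsupp : Bornology.IsBounded (Function.support φ)) (hp : p ∈ upperHS d)
    (v : Ed d × ℝ) :
    fderiv ℝ (horizontalConv k φ) p v = horizontalConv (fun q => fderiv ℝ k q v) φ p := by
  rw [(hasFDerivAt_horizontalConv hk hφ hsupp hp).fderiv, horizontalConv,
    ContinuousLinearMap.integral_apply]
  · rfl
  · exact integrable_smul_comp_sub (hk.continuousOn_fderiv_of_isOpen (isOpen_upperHS d) le_rfl) hφ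
      hsupp hp

lemma contDiffOn_fderiv_apply {f : Ed d × ℝ → ℝ} (hf : ContDiffOn ℝ 2 f (upperHS d))
    (v : Ed d × ℝ) : ContDiffOn ℝ 1 (fun q => fderiv ℝ f q v) (upperHS d) :=
  (hf.fderiv_of_isOpen (isOpen_upperHS d) (by norm_num)).clm_apply contDiffOn_const

lemma pd2_horizontalConv {k : Ed d × ℝ → ℝ} (hk : ContDiffOn ℝ 2 k (upperHS d))
    (hφ : Integrable φ) (hsupp : Bornology.IsBounded (Function.support φ)) (hp : p ∈ upperHS d)
    (v : Ed d × ℝ) : pd2 (horizontalConv k φ) p v = horizontalConv (fun q => pd2 k q v) φ p := by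
  have hfirst : (fun q => fderiv ℝ (horizontalConv k φ) q v) =ᶠ[𝓝 p]
      horizontalConv (fun q => fderiv ℝ k q v) φ := by
    filter_upwards [(isOpen_upperHS d).mem_nhds hp] with q hq
    exact fderiv_horizontalConv_apply (hk.of_le one_le_two) hφ hsupp hq v
  rw [pd2, hfirst.fderiv_eq,
    fderiv_horizontalConv_apply (contDiffOn_fderiv_apply hk v) hφ hsupp hp]
  rfl

lemma lapE_horizontalConv {k : Ed d × ℝ → ℝ} (hk : ContDiffOn ℝ 2 k (upperHS d))
    (hφ : Integrable φ) (hsupp : Bornology.IsBounded (Function.support φ)) (hp : p ∈ upperHS d) :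
    lapE (horizontalConv k φ) p = horizontalConv (lapE k) φ p := by
  have hint (v : Ed d × ℝ) : Integrable fun t => φ t • pd2 k (p - (t, (0 : ℝ))) v := by
    have hcont : ContinuousOn (fun q => pd2 k q v) (upperHS d) :=
      ((contDiffOn_fderiv_apply hk v).continuousOn_fderiv_of_isOpen (isOpen_upperHS d)
        le_rfl).clm_apply continuousOn_const
    exact integrable_smul_comp_sub hcont hφ hsupp hp
  simp only [lapE, pd2_horizontalConv hk hφ hsupp hp, horizontalConv, smul_add, Finset.smul_sum]
  rw [integral_add (integrable_finsetSum _ fun i _ => hint _) (hint _),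
    integral_finsetSum _ fun i _ => hint _]

end HorizontalConv

section PoissonIntegral

variable {d : ℕ} {φ ψ : Ed d → ℝ} {p : Ed d × ℝ}

/-- The Poisson integral `∫ φ(t) P(x - t, y) dt` of a boundary density `φ`. -/
def poissonIntegral (φ : Ed d → ℝ) : Ed d × ℝ → ℝ := horizontalConv (poissonKernelHS d) φ

lemma contDiffOn_poissonIntegral (hφ : Integrable φ)
    (hsupp : Bornology.IsBounded (Function.support φ)) :
    ContDiffOn ℝ 2 (poissonIntegral φ) (upperHS d) :=
  contDiffOn_horizontalConv hφ hsupp 2 (contDiffOn_poissonKernelHS d _)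

lemma lapE_poissonIntegral (hφ : Integrable φ) (hsupp : Bornology.IsBounded (Function.support φ))
    (hp : p ∈ upperHS d) : lapE (poissonIntegral φ) p = 0 := by
  rw [poissonIntegral, lapE_horizontalConv (contDiffOn_poissonKernelHS d 2) hφ hsupp hp]
  simp [horizontalConv, lapE_poissonKernelHS (sub_mem_upperHS hp _)]

lemma poissonIntegral_eq_integral_sub_smul (φ : Ed d → ℝ) (hp : p ∈ upperHS d) :
    poissonIntegral φ p = ∫ s, φ (p.1 - p.2 • s) * poissonKernelHS d (s, 1) := by
  obtain ⟨x, y⟩ := p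
  have hy : 0 < y := hp
  have hscale := Measure.integral_comp_inv_smul volume
    (fun s : Ed d => φ (x - y • s) * poissonKernelHS d (s, 1)) y
  have hreflect :=
    integral_sub_left_eq_self (fun t : Ed d => φ (x - t) * poissonKernelHS d (t, y)) volume x
  simp only [sub_sub_cancel] at hreflect
  simp only [poissonKernelHS_smul _ hy, smul_inv_smul₀ hy.ne', finrank_euclideanSpace,
    Fintype.card_fin, abs_of_pos (pow_pos hy d), smul_eq_mul, mul_left_comm _ (y ^ d),
    integral_const_mul] at hscale
  simp only [poissonIntegral, horizontalConv, Prod.mk_sub_mk, sub_zero, smul_eq_mul, hreflect]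
  exact mul_left_cancel₀ (pow_pos hy d).ne' hscale

lemma integral_poissonKernelHS_sub (hp : p ∈ upperHS d) :
    ∫ t : Ed d, poissonKernelHS d (p - (t, 0)) = 1 := by
  simpa [poissonIntegral, horizontalConv, integral_poissonKernelHS_one] using
    poissonIntegral_eq_integral_sub_smul (fun _ => 1) hp

lemma integrable_poissonKernelHS_sub (hp : p ∈ upperHS d) :
    Integrable fun t : Ed d => poissonKernelHS d (p - (t, 0)) :=
  .of_integral_ne_zero (by simp [integral_poissonKernelHS_sub hp])

lemma norm_mul_poissonKernelHS_one_le {b M : ℝ} (hb : |b| ≤ M) (s : Ed d) :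
    ‖b * poissonKernelHS d (s, 1)‖ ≤ M * poissonKernelHS d (s, 1) := by
  have hpos := (poissonKernelHS_pos (prodMk_one_mem_upperHS s)).le
  rw [norm_mul, Real.norm_eq_abs, Real.norm_of_nonneg hpos]
  gcongr

lemma abs_poissonIntegral_le {M : ℝ} (hφ : ∀ t, |φ t| ≤ M) (hp : p ∈ upperHS d) :
    |poissonIntegral φ p| ≤ M := by
  rw [poissonIntegral_eq_integral_sub_smul φ hp]
  simpa [integral_const_mul, integral_poissonKernelHS_one] using
    norm_integral_le_of_norm_le ((integrable_poissonKernelHS_one d).const_mul M)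
      (.of_forall fun s => norm_mul_poissonKernelHS_one_le (hφ (p.1 - p.2 • s)) s)

lemma tendsto_poissonIntegral_of_continuousAt {M : ℝ} (hM : ∀ t, |φ t| ≤ M)
    (hφ : Measurable φ) {z : Ed d} (hz : ContinuousAt φ z) :
    Tendsto (poissonIntegral φ) (𝓝[upperHS d] (z, (0 : ℝ))) (𝓝 (φ z)) := by
  have hlim : Tendsto (fun p : Ed d × ℝ => ∫ s, φ (p.1 - p.2 • s) * poissonKernelHS d (s, 1))
      (𝓝[upperHS d] (z, (0 : ℝ))) (𝓝 (∫ s, φ z * poissonKernelHS d (s, 1))) := by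
    refine tendsto_integral_filter_of_dominated_convergence
      (fun s => M * poissonKernelHS d (s, 1)) (.of_forall fun p => ?_)
      (.of_forall fun p => .of_forall fun s => norm_mul_poissonKernelHS_one_le (hM _) s)
      ((integrable_poissonKernelHS_one d).const_mul M) (.of_forall fun s => ?_)
    · exact (hφ.comp (by fun_prop)).aestronglyMeasurable.mul
        (integrable_poissonKernelHS_one d).aestronglyMeasurable
    · have hline : Continuous fun p : Ed d × ℝ => p.1 - p.2 • s := by fun_prop
      have hline₀ : Tendsto (fun p : Ed d × ℝ => p.1 - p.2 • s) (𝓝 (z, 0)) (𝓝 z) := by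
        simpa using hline.tendsto (z, 0)
      exact (hz.tendsto.comp (hline₀.mono_left nhdsWithin_le_nhds)).mul_const _
  rw [integral_const_mul, integral_poissonKernelHS_one, mul_one] at hlim
  refine hlim.congr' ?_
  filter_upwards [self_mem_nhdsWithin] with p hp
  exact (poissonIntegral_eq_integral_sub_smul φ hp).symm

/-- The Poisson integral at `(x, y)` of the indicator of the ball of radius `a y` about `x`; by
scale invariance it depends on the aperture `a` only. -/
def poissonBallMass (d : ℕ) (a : ℝ) : ℝ := ∫ s in ball (0 : Ed d) a, poissonKernelHS d (s, 1)

lemma poissonBallMass_pos (d : ℕ) {a : ℝ} (ha : 0 < a) : 0 < poissonBallMass d a := by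
  have hpos (s : Ed d) : 0 < poissonKernelHS d (s, 1) :=
    poissonKernelHS_pos (prodMk_one_mem_upperHS s)
  rw [poissonBallMass, setIntegral_pos_iff_support_of_nonneg_ae (.of_forall fun s => (hpos s).le)
    (integrable_poissonKernelHS_one d).integrableOn]
  have hsupport : Function.support (fun s : Ed d => poissonKernelHS d (s, 1)) = Set.univ :=
    Set.eq_univ_of_forall fun s => (hpos s).ne'
  rw [hsupport, Set.univ_inter]
  exact measure_ball_pos _ _ ha

lemma poissonIntegral_indicator_one {D : Set (Ed d)} (hD : MeasurableSet D) (hp : p ∈ upperHS d) :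
    poissonIntegral (D.indicator 1) p =
      ∫ s in {s | p.1 - p.2 • s ∈ D}, poissonKernelHS d (s, 1) := by
  have hmeas : MeasurableSet {s | p.1 - p.2 • s ∈ D} :=
    hD.preimage (by fun_prop : Measurable fun s : Ed d => p.1 - p.2 • s)
  rw [poissonIntegral_eq_integral_sub_smul _ hp, ← integral_indicator hmeas]
  congr 1 with s
  by_cases hs : p.1 - p.2 • s ∈ D <;> simp [hs]

lemma poissonIntegral_indicator_nonneg (D : Set (Ed d)) (hp : p ∈ upperHS d) :
    0 ≤ poissonIntegral (D.indicator 1) p :=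
  integral_nonneg fun t => mul_nonneg (Set.indicator_nonneg (fun _ _ => zero_le_one) t)
    (poissonKernelHS_pos (sub_mem_upperHS hp t)).le

lemma poissonBallMass_le_poissonIntegral {a : ℝ} {D : Set (Ed d)} (hD : MeasurableSet D)
    (hp : p ∈ upperHS d) (hball : ball p.1 (a * p.2) ⊆ D) :
    poissonBallMass d a ≤ poissonIntegral (D.indicator 1) p := by
  have hy : 0 < p.2 := hp
  rw [poissonIntegral_indicator_one hD hp]
  refine setIntegral_mono_set (integrable_poissonKernelHS_one d).integrableOn
    (.of_forall fun s => (poissonKernelHS_pos (prodMk_one_mem_upperHS s)).le)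
    (.of_forall fun s hs => hball ?_)
  replace hs : ‖s‖ < a := mem_ball_zero_iff.1 hs
  rw [mem_ball, dist_eq_norm, sub_sub_cancel_left, norm_neg, norm_smul, Real.norm_of_nonneg hy.le,
    mul_comm]
  gcongr

end PoissonIntegral

/-! ### Fatou's theorem -/

section DyadicAverages

lemma abs_integral_mul_le_tsum_average {X ι : Type*} [Countable ι] [MeasurableSpace X]
    {μ : Measure X} {B : ι → Set X} (hB : ∀ i, MeasurableSet (B i)) {f K : X → ℝ} {c : ι → ℝ}
    (hf : ∀ i, IntegrableOn f (B i) μ) (hc : ∀ i, 0 ≤ c i)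
    (hK : ∀ t, ∃ i, t ∈ B i ∧ |K t| ≤ c i * (μ.real (B i))⁻¹)
    (hsum : Summable fun i => c i * ⨍ t in B i, |f t| ∂μ) :
    |∫ t, f t * K t ∂μ| ≤ ∑' i, c i * ⨍ t in B i, |f t| ∂μ := by
  have hnonneg (i : ι) : 0 ≤ c i * ⨍ t in B i, |f t| ∂μ :=
    mul_nonneg (hc i) (integral_nonneg fun t => abs_nonneg _)
  have hterm (i : ι) : ENNReal.ofReal (c i * ⨍ t in B i, |f t| ∂μ) =
      ∫⁻ t in B i, ENNReal.ofReal (c i * (μ.real (B i))⁻¹ * |f t|) ∂μ := by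
    rw [← ofReal_integral_eq_lintegral_ofReal ((hf i).abs.const_mul _)
      (.of_forall fun t => mul_nonneg (mul_nonneg (hc i) (by positivity)) (abs_nonneg _)),
      integral_const_mul, setAverage_eq, smul_eq_mul, mul_assoc]
  have hae (i : ι) : AEMeasurable
      ((B i).indicator fun t => ENNReal.ofReal (c i * (μ.real (B i))⁻¹ * |f t|)) μ :=
    (aemeasurable_indicator_iff (hB i)).2
      ((hf i).abs.aestronglyMeasurable.aemeasurable.const_mul _).ennreal_ofReal
  refine (norm_integral_le_lintegral_norm fun t => f t * K t).trans
    (ENNReal.toReal_le_of_le_ofReal (tsum_nonneg hnonneg) ?_)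
  rw [ENNReal.ofReal_tsum_of_nonneg hnonneg hsum]
  simp_rw [hterm, ← lintegral_indicator (hB _)]
  rw [← lintegral_tsum hae]
  refine lintegral_mono fun t => ?_
  obtain ⟨i, hi, hKi⟩ := hK t
  refine le_trans ?_ (ENNReal.le_tsum i)
  rw [Set.indicator_of_mem hi, norm_mul, mul_comm, Real.norm_eq_abs, Real.norm_eq_abs]
  gcongr

lemma tendsto_tsum_half_pow_mul_nhdsGT_zero {m : ℝ → ℝ} {b : ℝ} (hm : Tendsto m (𝓝[>] 0) (𝓝 0))
    (hb : ∀ r > 0, |m r| ≤ b) :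
    Tendsto (fun y : ℝ => ∑' k : ℕ, (1 / 2) ^ k * m (2 ^ k * y)) (𝓝[>] 0) (𝓝 0) := by
  have hlim (k : ℕ) : Tendsto (fun y : ℝ => (1 / 2) ^ k * m (2 ^ k * y)) (𝓝[>] 0) (𝓝 0) := by
    have hscale : Tendsto (fun y : ℝ => 2 ^ k * y) (𝓝[>] 0) (𝓝[>] 0) := by
      refine tendsto_nhdsWithin_iff.2 ⟨tendsto_nhdsWithin_of_tendsto_nhds ?_, ?_⟩
      · simpa using (continuous_const_mul ((2 : ℝ) ^ k)).tendsto 0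
      · filter_upwards [self_mem_nhdsWithin] with y (hy : 0 < y)
        exact mul_pos (pow_pos two_pos k) hy
    simpa using (hm.comp hscale).const_mul ((1 / 2 : ℝ) ^ k)
  have hdom : ∀ᶠ y : ℝ in 𝓝[>] 0, ∀ k : ℕ, ‖(1 / 2) ^ k * m (2 ^ k * y)‖ ≤ (1 / 2) ^ k * b := by
    filter_upwards [self_mem_nhdsWithin] with y (hy : 0 < y) k
    rw [norm_mul, Real.norm_of_nonneg (by positivity : (0 : ℝ) ≤ (1 / 2) ^ k)]
    gcongr
    exact hb _ (by positivity)
  simpa using tendsto_tsum_of_dominated_convergence (summable_geometric_two.mul_right b) hlim hdom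

lemma summable_half_pow_mul {m : ℝ → ℝ} {b y : ℝ} (hb : ∀ r > 0, |m r| ≤ b) (hy : 0 < y) :
    Summable fun k : ℕ => (1 / 2) ^ k * m (2 ^ k * y) := by
  refine Summable.of_norm_bounded (summable_geometric_two.mul_right b) fun k => ?_
  rw [norm_mul, Real.norm_of_nonneg (by positivity : (0 : ℝ) ≤ (1 / 2) ^ k)]
  gcongr
  exact hb _ (by positivity)

lemma exists_forall_setAverage_closedBall_le {X : Type*} [PseudoMetricSpace X] [ProperSpace X]
    [MeasurableSpace X] [OpensMeasurableSpace X] {μ : Measure X} [IsFiniteMeasureOnCompacts μ]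
    [μ.IsOpenPosMeasure] {φ : X → ℝ} (hφ : Integrable φ μ) (x : X) (c : ℝ)
    (hlim : Tendsto (fun r => ⨍ t in closedBall x r, |φ t - c| ∂μ) (𝓝[>] 0) (𝓝 0)) :
    ∃ b, ∀ r > 0, |⨍ t in closedBall x r, |φ t - c| ∂μ| ≤ b := by
  obtain ⟨δ, hδ, hsmall⟩ :=
    mem_nhdsGT_iff_exists_Ioo_subset.1 (hlim.eventually (gt_mem_nhds one_pos))
  have hvol {r : ℝ} (hr : 0 < r) : 0 < μ.real (closedBall x r) :=
    ENNReal.toReal_pos (measure_closedBall_pos μ x hr).ne' measure_closedBall_lt_top.ne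
  refine ⟨max 1 ((μ.real (closedBall x δ))⁻¹ * (∫ t, |φ t| ∂μ) + |c|), fun r hr => ?_⟩
  have hnonneg : 0 ≤ ⨍ t in closedBall x r, |φ t - c| ∂μ := integral_nonneg fun t => abs_nonneg _
  rw [abs_of_nonneg hnonneg]
  rcases lt_or_ge r δ with h | h
  · exact (hsmall ⟨hr, h⟩).le.trans (le_max_left _ _)
  refine le_trans ?_ (le_max_right _ _)
  have hconst : IntegrableOn (fun _ => |c|) (closedBall x r) μ :=
    integrableOn_const measure_closedBall_lt_top.ne
  have hsplit : ∫ t in closedBall x r, |φ t - c| ∂μ ≤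
      (∫ t, |φ t| ∂μ) + μ.real (closedBall x r) * |c| :=
    calc ∫ t in closedBall x r, |φ t - c| ∂μ
        ≤ ∫ t in closedBall x r, (|φ t| + |c|) ∂μ :=
          setIntegral_mono (hφ.integrableOn.sub (integrableOn_const
            measure_closedBall_lt_top.ne)).abs (hφ.abs.integrableOn.add hconst)
            fun t => abs_sub _ _
      _ = (∫ t in closedBall x r, |φ t| ∂μ) + μ.real (closedBall x r) * |c| := by
          rw [integral_add hφ.abs.integrableOn hconst, setIntegral_const, smul_eq_mul]
      _ ≤ _ := by
          gcongr
          exacts [.of_forall fun t => abs_nonneg _, hφ.abs, Measure.restrict_le_self]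
  calc ⨍ t in closedBall x r, |φ t - c| ∂μ
      ≤ (μ.real (closedBall x r))⁻¹ * ((∫ t, |φ t| ∂μ) + μ.real (closedBall x r) * |c|) := by
        rw [setAverage_eq, smul_eq_mul]
        gcongr
    _ = (μ.real (closedBall x r))⁻¹ * (∫ t, |φ t| ∂μ) + |c| := by
        rw [mul_add, inv_mul_cancel_left₀ (hvol hr).ne']
    _ ≤ _ := by
        gcongr
        exacts [hvol hδ, measure_closedBall_lt_top.ne]

end DyadicAverages

section Fatou

variable {d : ℕ} {φ : Ed d → ℝ} {p : Ed d × ℝ}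

lemma poissonKernelHS_le_vertex {a : ℝ} {x : Ed d} (hp : p ∈ cone a x) (t : Ed d) :
    poissonKernelHS d (p - (t, 0)) ≤
      (2 + 2 * a ^ 2) ^ (((d : ℝ) + 1) / 2) * poissonKernelHS d (x - t, p.2) := by
  refine poissonKernelHS_le_mul (sub_mem_upperHS hp.1 t) (by simp) (by positivity) ?_
  have hdist : dist p.1 x ^ 2 ≤ (a * p.2) ^ 2 := by
    gcongr
    exact hp.2.le
  have htri : ‖x - t‖ ≤ dist p.1 x + ‖p.1 - t‖ := by
    rw [← dist_eq_norm, ← dist_eq_norm, dist_comm p.1 x]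
    exact dist_triangle x p.1 t
  simp only [euclideanSq, Prod.fst_sub, Prod.snd_sub, sub_zero]
  nlinarith [sq_nonneg (dist p.1 x - ‖p.1 - t‖), norm_nonneg (x - t), sq_nonneg p.2,
    mul_nonneg (sq_nonneg a) (sq_nonneg ‖p.1 - t‖)]

lemma poissonIntegral_sub_eq_integral (hφ : Integrable φ) (c : ℝ) (hp : p ∈ upperHS d) :
    poissonIntegral φ p - c = ∫ t, (φ t - c) * poissonKernelHS d (p - (t, 0)) := by
  have hbdd (t : Ed d) : ‖poissonKernelHS d (p - (t, 0))‖ ≤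
      (poissonMass d)⁻¹ * (p.2 * (p.2 ^ (d + 1))⁻¹) := by
    rw [Real.norm_of_nonneg (poissonKernelHS_pos (sub_mem_upperHS hp t)).le]
    simpa using poissonKernelHS_le_of_sq_le (sub_mem_upperHS hp t) hp
      (by simp [euclideanSq] : p.2 ^ 2 ≤ euclideanSq (p - (t, 0)))
  have hint : Integrable fun t => φ t * poissonKernelHS d (p - (t, 0)) :=
    hφ.mul_bdd (integrable_poissonKernelHS_sub hp).aestronglyMeasurable (.of_forall hbdd)
  simp only [sub_mul]
  rw [integral_sub hint ((integrable_poissonKernelHS_sub hp).const_mul c), integral_const_mul,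
    integral_poissonKernelHS_sub hp, mul_one]
  rfl

lemma exists_dyadic_scale {r y : ℝ} (hy : 0 < y) :
    ∃ k : ℕ, r ≤ 2 ^ k * y ∧ 2 ^ k * y ≤ 2 * max r y := by
  have hex : ∃ k : ℕ, r ≤ 2 ^ k * y := by
    obtain ⟨k, hk⟩ := pow_unbounded_of_one_lt (r / y) one_lt_two
    exact ⟨k, ((div_lt_iff₀ hy).1 hk).le⟩
  classical
  refine ⟨Nat.find hex, Nat.find_spec hex, ?_⟩
  rcases hk : Nat.find hex with _ | k
  · linarith [le_max_right r y]
  · have hlt : ¬ r ≤ 2 ^ k * y := Nat.find_min hex (by omega)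
    rw [pow_succ]
    linarith [le_max_left r y]

lemma exists_forall_poissonKernelHS_le_dyadic (d : ℕ) (x : Ed d) : ∃ C ≥ 0, ∀ y > 0, ∀ t, ∃ k : ℕ,
    t ∈ closedBall x (2 ^ k * y) ∧ poissonKernelHS d (x - t, y) ≤
      C * (1 / 2) ^ k * (volume.real (closedBall x (2 ^ k * y)))⁻¹ := by
  have hmass := (poissonMass_pos d).le
  refine ⟨(poissonMass d)⁻¹ * 2 ^ (d + 1) * volume.real (ball (0 : Ed d) 1), by positivity,
    fun y hy t => ?_⟩
  obtain ⟨k, hk, hk'⟩ := exists_dyadic_scale (r := ‖x - t‖) hy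
  have hunit : volume.real (ball (0 : Ed d) 1) ≠ 0 :=
    (ENNReal.toReal_pos (measure_ball_pos _ _ one_pos).ne' measure_ball_lt_top.ne).ne'
  refine ⟨k, by rwa [mem_closedBall', dist_eq_norm], ?_⟩
  have hsq : (2 ^ k * y / 2) ^ 2 ≤ euclideanSq (x - t, y) := by
    calc (2 ^ k * y / 2) ^ 2 ≤ max ‖x - t‖ y ^ 2 := by
          gcongr
          linarith
      _ ≤ euclideanSq (x - t, y) := by
          rcases max_cases ‖x - t‖ y with h | h <;> simp [h.1, euclideanSq, sq_nonneg]
  calc poissonKernelHS d (x - t, y)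
      ≤ (poissonMass d)⁻¹ * (y * ((2 ^ k * y / 2) ^ (d + 1))⁻¹) :=
        poissonKernelHS_le_of_sq_le hy (by positivity) hsq
    _ = _ := by
        rw [Measure.addHaar_real_closedBall _ _ (by positivity), finrank_euclideanSpace,
          Fintype.card_fin, div_pow, pow_succ (2 ^ k * y), one_div, inv_pow]
        field_simp

lemma tendsto_poissonIntegral_of_tendsto_average (hφ : Integrable φ) {x : Ed d}
    (hx : Tendsto (fun r => ⨍ t in closedBall x r, |φ t - φ x|) (𝓝[>] 0) (𝓝 0)) (a : ℝ) :
    Tendsto (poissonIntegral φ) (𝓝[cone a x] (x, (0 : ℝ))) (𝓝 (φ x)) := by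
  set m : ℝ → ℝ := fun r => ⨍ t in closedBall x r, |φ t - φ x|
  obtain ⟨b, hb⟩ := exists_forall_setAverage_closedBall_le hφ x (φ x) hx
  obtain ⟨C, hC, hdyadic⟩ := exists_forall_poissonKernelHS_le_dyadic d x
  set D := (2 + 2 * a ^ 2) ^ (((d : ℝ) + 1) / 2) * C
  have hheight : Tendsto (fun p : Ed d × ℝ => p.2) (𝓝[cone a x] (x, (0 : ℝ))) (𝓝[>] 0) :=
    tendsto_nhdsWithin_iff.2 ⟨(continuous_snd.tendsto (x, (0 : ℝ))).mono_left nhdsWithin_le_nhds,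
      eventually_mem_nhdsWithin.mono fun p hp => hp.1⟩
  have hlim := ((tendsto_tsum_half_pow_mul_nhdsGT_zero hx hb).comp hheight).const_mul D
  rw [mul_zero] at hlim
  rw [tendsto_iff_norm_sub_tendsto_zero]
  refine squeeze_zero' (.of_forall fun p => norm_nonneg _) ?_ hlim
  filter_upwards [self_mem_nhdsWithin] with p hp
  have hK (t : Ed d) : ∃ k : ℕ, t ∈ closedBall x (2 ^ k * p.2) ∧ |poissonKernelHS d (p - (t, 0))| ≤
      D * (1 / 2) ^ k * (volume.real (closedBall x (2 ^ k * p.2)))⁻¹ := by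
    obtain ⟨k, hk, hle⟩ := hdyadic p.2 hp.1 t
    refine ⟨k, hk, ?_⟩
    rw [abs_of_pos (poissonKernelHS_pos (sub_mem_upperHS hp.1 t))]
    refine (poissonKernelHS_le_vertex hp t).trans ?_
    simp only [D, mul_assoc] at hle ⊢
    gcongr
  have hsum : Summable fun k : ℕ => D * (1 / 2) ^ k * m (2 ^ k * p.2) := by
    simpa only [mul_assoc] using (summable_half_pow_mul hb hp.1).mul_left D
  rw [poissonIntegral_sub_eq_integral hφ (φ x) hp.1, Real.norm_eq_abs, Function.comp_apply,
    ← tsum_mul_left]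
  simp only [← mul_assoc]
  exact abs_integral_mul_le_tsum_average (fun k => measurableSet_closedBall)
    (fun k => hφ.integrableOn.sub (integrableOn_const measure_closedBall_lt_top.ne))
    (fun k => by positivity) hK hsum

lemma ae_forall_tendsto_poissonIntegral (hφ : Integrable φ) : ∀ᵐ x : Ed d, ∀ a : ℝ,
    Tendsto (poissonIntegral φ) (𝓝[cone a x] (x, (0 : ℝ))) (𝓝 (φ x)) := by
  filter_upwards [IsUnifLocDoublingMeasure.ae_tendsto_average_norm_sub (volume : Measure (Ed d))
    hφ.locallyIntegrable 1] with x hx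
  refine tendsto_poissonIntegral_of_tendsto_average hφ
    (hx (l := 𝓝[>] (0 : ℝ)) (fun _ => x) id tendsto_id ?_)
  filter_upwards [self_mem_nhdsWithin] with r hr
  have : (0 : ℝ) < r := hr
  simp [this.le]

end Fatou

/-! ### Comparison with Poisson integrals on sawtooth regions -/

section Sawtooth

variable {d : ℕ} {F : Set (Ed d)} {a h h' M s : ℝ} {v : Ed d × ℝ → ℝ} {p : Ed d × ℝ}

/-- The sawtooth region over `F`: the union of the truncated cones `Γ_a^h(x)`, `x ∈ F`. -/
def sawtooth (F : Set (Ed d)) (a h : ℝ) : Set (Ed d × ℝ) := ⋃ x ∈ F, coneT a h x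

/-- The points at which `v` is twice differentiable and bounded, together with its Laplacian,
by `M`. -/
def tameSet (v : Ed d × ℝ → ℝ) (M : ℝ) : Set (Ed d × ℝ) :=
  {p | ContDiffAt ℝ 2 v p ∧ |v p| ≤ M ∧ |lapE v p| ≤ M}

/-- The points outside `F` which are close enough to `F` to lie under the sawtooth region
`sawtooth F a h`. -/
def collar (F : Set (Ed d)) (a h : ℝ) : Set (Ed d) := thickening (a * h) F \ F

/-- The restriction of `v` to the horizontal slice at height `s` of a sawtooth region, extended
by zero. -/
def sawtoothSlice (F : Set (Ed d)) (a h : ℝ) (v : Ed d × ℝ → ℝ) (s : ℝ) (t : Ed d) : ℝ :=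
  (sawtooth F a h).indicator v (t, s)

/-- The superharmonic barrier on a sawtooth region: the Poisson integral controls the lateral
boundary, the linear term the top, and the quadratic term makes the Laplacian equal to `-2M`. -/
def sawtoothBarrier (F : Set (Ed d)) (a h M : ℝ) : Ed d × ℝ → ℝ :=
  (2 * M / poissonBallMass d a) • poissonIntegral ((collar F a h).indicator 1) +
    fun p => 4 * M / h * p.2 + M * (p.2 * (h - p.2))

lemma mem_sawtooth : p ∈ sawtooth F a h ↔ 0 < p.2 ∧ p.2 < h ∧ p.1 ∈ thickening (a * p.2) F := by
  simp only [sawtooth, coneT, Set.mem_iUnion₂, Set.mem_ofPred_eq, mem_thickening_iff]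
  exact ⟨fun ⟨x, hx, h₁, h₂, h₃⟩ => ⟨h₁, h₂, x, hx, h₃⟩,
    fun ⟨h₁, h₂, x, hx, h₃⟩ => ⟨x, hx, h₁, h₂, h₃⟩⟩

lemma isOpen_coneT (a h : ℝ) (x : Ed d) : IsOpen (coneT a h x) :=
  (isOpen_lt continuous_const continuous_snd).inter
    ((isOpen_lt continuous_snd continuous_const).inter
      (isOpen_lt (continuous_fst.dist continuous_const) (continuous_const.mul continuous_snd)))

lemma isOpen_sawtooth (F : Set (Ed d)) (a h : ℝ) : IsOpen (sawtooth F a h) :=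
  isOpen_biUnion fun x _ => isOpen_coneT a h x

lemma sawtooth_subset_upperHS : sawtooth F a h ⊆ upperHS d := fun _ hp => (mem_sawtooth.1 hp).1

lemma sawtooth_mono_height (hh : h' ≤ h) : sawtooth F a h' ⊆ sawtooth F a h := by
  simp only [Set.subset_def, mem_sawtooth]
  exact fun p ⟨h₁, h₂, h₃⟩ => ⟨h₁, h₂.trans_le hh, h₃⟩

lemma sawtooth_subset_prod (ha : 0 < a) :
    sawtooth F a h ⊆ thickening (a * h) F ×ˢ Set.Ioo 0 h := by
  intro p hp
  obtain ⟨hp₁, hp₂, hp₃⟩ := mem_sawtooth.1 hp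
  exact ⟨thickening_mono (by gcongr) F hp₃, hp₁, hp₂⟩

lemma closure_sawtooth_subset :
    closure (sawtooth F a h) ⊆ {p | 0 ≤ p.2 ∧ p.2 ≤ h ∧ p.1 ∈ cthickening (a * p.2) F} := by
  refine closure_minimal (fun p hp => ?_) ?_
  · obtain ⟨hp₁, hp₂, hp₃⟩ := mem_sawtooth.1 hp
    exact ⟨hp₁.le, hp₂.le, thickening_subset_cthickening _ _ hp₃⟩
  · have hdist : IsClosed {p : Ed d × ℝ | infEDist p.1 F ≤ ENNReal.ofReal (a * p.2)} :=
      isClosed_le (continuous_infEDist.comp continuous_fst)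
        (ENNReal.continuous_ofReal.comp (by fun_prop))
    exact (isClosed_le continuous_const continuous_snd).inter
      ((isClosed_le continuous_snd continuous_const).inter hdist)

lemma add_height_mem_sawtooth (ha : 0 < a) (hs : 0 < s) (hh : h' + s < h)
    (hp : p ∈ closure (sawtooth F a h')) : p + (0, s) ∈ sawtooth F a h := by
  obtain ⟨hp₁, hp₂, hp₃⟩ := closure_sawtooth_subset hp
  rw [mem_sawtooth, Prod.fst_add, Prod.snd_add, add_zero]
  have hlt : a * p.2 < a * (p.2 + s) := by gcongr; linarith
  exact ⟨by linarith, by linarith,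
    cthickening_subset_thickening' (mul_pos ha (by linarith)) hlt F hp₃⟩

lemma tameSet_subset_tameSet_neg (v : Ed d × ℝ → ℝ) (M : ℝ) : tameSet v M ⊆ tameSet (-v) M :=
  fun p ⟨hC, hv, hlap⟩ => ⟨hC.neg, by rwa [Pi.neg_apply, abs_neg], by rwa [lapE_neg, abs_neg]⟩

lemma poissonBallMass_le_collar (hF : MeasurableSet F) (hp : p ∈ upperHS d)
    (hnot : p.1 ∉ thickening (a * p.2) F)
    (hball : ball p.1 (a * p.2) ⊆ thickening (a * h) F) :
    poissonBallMass d a ≤ poissonIntegral ((collar F a h).indicator 1) p := by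
  refine poissonBallMass_le_poissonIntegral (isOpen_thickening.measurableSet.diff hF) hp
    fun t ht => ⟨hball ht, fun htF => hnot ?_⟩
  exact mem_thickening_iff.2 ⟨t, htF, mem_ball'.1 ht⟩

end Sawtooth

section SawtoothSlice

variable {d : ℕ} {F : Set (Ed d)} {a h M s : ℝ} {v : Ed d × ℝ → ℝ} {z : Ed d}

lemma abs_sawtoothSlice_le (hM : 0 ≤ M) (hv : sawtooth F a h ⊆ tameSet v M) (s : ℝ) (t : Ed d) :
    |sawtoothSlice F a h v s t| ≤ M := by
  by_cases ht : (t, s) ∈ sawtooth F a h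
  · rw [sawtoothSlice, Set.indicator_of_mem ht]
    exact (hv ht).2.1
  · rwa [sawtoothSlice, Set.indicator_of_notMem ht, abs_zero]

lemma measurable_sawtoothSlice (hv : ContinuousOn v (sawtooth F a h)) (s : ℝ) :
    Measurable (sawtoothSlice F a h v s) := by
  classical
  have hind : Measurable ((sawtooth F a h).indicator v) := by
    rw [← Set.piecewise_eq_indicator]
    exact hv.measurable_piecewise continuousOn_const (isOpen_sawtooth F a h).measurableSet
  exact hind.comp (by fun_prop)

lemma support_sawtoothSlice_subset (ha : 0 < a) :
    Function.support (sawtoothSlice F a h v s) ⊆ thickening (a * h) F := fun _ ht =>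
  (sawtooth_subset_prod ha (Set.support_indicator_subset ht)).1

lemma continuousAt_sawtoothSlice (hz : (z, s) ∈ sawtooth F a h) (hv : ContinuousAt v (z, s)) :
    ContinuousAt (sawtoothSlice F a h v s) z := by
  have hind : (sawtooth F a h).indicator v =ᶠ[𝓝 (z, s)] v :=
    Set.eqOn_indicator.eventuallyEq_of_mem ((isOpen_sawtooth F a h).mem_nhds hz)
  exact ContinuousAt.comp (f := fun t => (t, s)) (hv.congr hind.symm) (by fun_prop)

lemma integrable_of_forall_abs_le_of_isBounded_support {X : Type*} [PseudoMetricSpace X]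
    [ProperSpace X] [MeasurableSpace X] [OpensMeasurableSpace X]
    {μ : Measure X} [IsFiniteMeasureOnCompacts μ] {φ : X → ℝ} {C : ℝ} (hφ : Measurable φ)
    (hC : ∀ t, |φ t| ≤ C) (hsupp : Bornology.IsBounded (Function.support φ)) :
    Integrable φ μ := by
  refine (integrableOn_iff_integrable_of_support_subset
    subset_closure (s := closure (Function.support φ))).1 ?_
  exact Measure.integrableOn_of_bounded hsupp.isCompact_closure.measure_lt_top.ne
    hφ.aestronglyMeasurable (.of_forall hC)

end SawtoothSlice

section SawtoothBarrier

variable {d : ℕ} {F : Set (Ed d)} {a h M : ℝ} {p : Ed d × ℝ}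

lemma integrable_collar_indicator (hF : MeasurableSet F) (hFb : Bornology.IsBounded F) :
    Integrable ((collar F a h).indicator (1 : Ed d → ℝ)) :=
  (integrable_indicator_iff (isOpen_thickening.measurableSet.diff hF)).2
    (integrableOn_const (hFb.thickening.subset Set.sdiff_subset).measure_lt_top.ne)

lemma isBounded_support_collar_indicator (hFb : Bornology.IsBounded F) :
    Bornology.IsBounded (Function.support ((collar F a h).indicator (1 : Ed d → ℝ))) :=
  hFb.thickening.subset (Set.support_indicator_subset.trans Set.sdiff_subset)

lemma contDiffAt_poissonIntegral {φ : Ed d → ℝ} (hφ : Integrable φ)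
    (hsupp : Bornology.IsBounded (Function.support φ)) (hp : p ∈ upperHS d) :
    ContDiffAt ℝ 2 (poissonIntegral φ) p :=
  (contDiffOn_poissonIntegral hφ hsupp).contDiffAt ((isOpen_upperHS d).mem_nhds hp)

lemma contDiffAt_sawtoothBarrier (hF : MeasurableSet F) (hFb : Bornology.IsBounded F)
    (hp : p ∈ upperHS d) : ContDiffAt ℝ 2 (sawtoothBarrier F a h M) p :=
  (contDiffAt_const.smul (contDiffAt_poissonIntegral (integrable_collar_indicator hF hFb)
    (isBounded_support_collar_indicator hFb) hp)).add (by fun_prop)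

lemma lapE_sawtoothBarrier (hF : MeasurableSet F) (hFb : Bornology.IsBounded F)
    (hp : p ∈ upperHS d) : lapE (sawtoothBarrier F a h M) p = -(2 * M) := by
  have hint := integrable_collar_indicator (a := a) (h := h) hF hFb
  have hsupp := isBounded_support_collar_indicator (a := a) (h := h) hFb
  have hC := contDiffAt_poissonIntegral hint hsupp hp
  have hderiv : deriv (deriv fun y => 4 * M / h * y + M * (y * (h - y))) p.2 = -(2 * M) := by
    have hfirst (y : ℝ) : HasDerivAt (fun y => 4 * M / h * y + M * (y * (h - y)))
        (4 * M / h + M * (h - 2 * y)) y := by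
      refine (((hasDerivAt_id y).const_mul (4 * M / h)).add
        (((hasDerivAt_id y).mul ((hasDerivAt_id y).const_sub h)).const_mul M)).congr_deriv ?_
      simp only [id]
      ring
    rw [funext fun y => (hfirst y).deriv]
    simp [mul_comm]
  have hsmul : ContDiffAt ℝ 2 ((2 * M / poissonBallMass d a) •
      poissonIntegral ((collar F a h).indicator 1)) p := contDiffAt_const.smul hC
  rw [sawtoothBarrier, lapE_add hsmul (by fun_prop), lapE_const_smul hC,
    lapE_poissonIntegral hint hsupp hp, mul_zero, zero_add,
    lapE_comp_snd (φ := fun y => 4 * M / h * y + M * (y * (h - y))) (by fun_prop), hderiv]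

lemma sawtoothBarrier_nonneg (ha : 0 < a) (hM : 0 ≤ M) (hp : p ∈ upperHS d) (hph : p.2 ≤ h) :
    0 ≤ sawtoothBarrier F a h M p := by
  have hp₀ : 0 < p.2 := hp
  have hh := hp₀.trans_le hph
  have hmass := poissonBallMass_pos d ha
  have hP := poissonIntegral_indicator_nonneg (collar F a h) hp
  have hquad : 0 ≤ M * (p.2 * (h - p.2)) := mul_nonneg hM (mul_nonneg hp₀.le (sub_nonneg.2 hph))
  simp only [sawtoothBarrier, Pi.add_apply, Pi.smul_apply, smul_eq_mul]
  exact add_nonneg (by positivity) (add_nonneg (by positivity) hquad)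

lemma two_mul_le_sawtoothBarrier_top (ha : 0 < a) (hM : 0 ≤ M) (hp : p ∈ upperHS d)
    (hph : p.2 = h / 2) : 2 * M ≤ sawtoothBarrier F a h M p := by
  have hh : 0 < h := by linarith [show 0 < p.2 from hp]
  have hmass := poissonBallMass_pos d ha
  have hP := poissonIntegral_indicator_nonneg (collar F a h) hp
  have hlin : 4 * M / h * p.2 = 2 * M := by
    rw [hph]
    field_simp
    ring
  have hrest : 0 ≤ 2 * M / poissonBallMass d a * poissonIntegral ((collar F a h).indicator 1) p +
      M * (p.2 * (h - p.2)) := by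
    rw [hph, sub_half]
    positivity
  simp only [sawtoothBarrier, Pi.add_apply, Pi.smul_apply, smul_eq_mul]
  linarith

lemma two_mul_le_sawtoothBarrier_lateral (hF : MeasurableSet F) (ha : 0 < a) (hM : 0 ≤ M)
    (hp : p ∈ upperHS d) (hph : p.2 < h / 2) (hmem : p.1 ∈ cthickening (a * p.2) F)
    (hnot : p.1 ∉ thickening (a * p.2) F) : 2 * M ≤ sawtoothBarrier F a h M p := by
  have hp₀ : 0 < p.2 := hp
  have hh : 0 < h := by linarith
  have hmass := poissonBallMass_pos d ha
  have hball : ball p.1 (a * p.2) ⊆ thickening (a * h) F :=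
    calc ball p.1 (a * p.2) ⊆ thickening (a * p.2) (cthickening (a * p.2) F) :=
          ball_subset_thickening hmem _
      _ ⊆ thickening (a * p.2 + a * p.2) F := thickening_cthickening_subset _ (by positivity) _
      _ ⊆ thickening (a * h) F := thickening_mono (by nlinarith) F
  have hP : 2 * M ≤
      2 * M / poissonBallMass d a * poissonIntegral ((collar F a h).indicator 1) p := by
    rw [div_mul_eq_mul_div, le_div_iff₀ hmass]
    gcongr
    exact poissonBallMass_le_collar hF hp hnot hball
  have hquad : 0 ≤ M * (p.2 * (h - p.2)) :=
    mul_nonneg hM (mul_nonneg hp₀.le (by linarith))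
  have hlin : 0 ≤ 4 * M / h * p.2 := by positivity
  simp only [sawtoothBarrier, Pi.add_apply, Pi.smul_apply, smul_eq_mul]
  linarith

lemma two_mul_le_sawtoothBarrier (hF : MeasurableSet F) (ha : 0 < a) (hM : 0 ≤ M)
    (hp : p ∈ upperHS d) (hcl : p ∈ closure (sawtooth F a (h / 2)))
    (hnot : p ∉ sawtooth F a (h / 2)) : 2 * M ≤ sawtoothBarrier F a h M p := by
  obtain ⟨-, hp₂, hp₃⟩ := closure_sawtooth_subset hcl
  rcases hp₂.eq_or_lt with htop | hlt
  · exact two_mul_le_sawtoothBarrier_top ha hM hp htop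
  · exact two_mul_le_sawtoothBarrier_lateral hF ha hM hp hlt hp₃
      fun hmem => hnot (mem_sawtooth.2 ⟨hp, hlt, hmem⟩)

end SawtoothBarrier

section Comparison

variable {d : ℕ} {F : Set (Ed d)} {a h M s : ℝ} {v : Ed d × ℝ → ℝ} {p : Ed d × ℝ}

/-- The amount by which `v`, lowered by `s`, exceeds the Poisson integral of its slice at height
`s` plus the barrier; the comparison principle says that it is nonpositive. -/
def sawtoothExcess (F : Set (Ed d)) (a h M : ℝ) (v : Ed d × ℝ → ℝ) (s : ℝ) : Ed d × ℝ → ℝ :=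
  (fun q => v (q + (0, s))) -
    (poissonIntegral (sawtoothSlice F a h v s) + sawtoothBarrier F a h M)

lemma continuousOn_of_subset_tameSet {Ω : Set (Ed d × ℝ)} (hv : Ω ⊆ tameSet v M) :
    ContinuousOn v Ω := fun _ hp => (hv hp).1.continuousAt.continuousWithinAt

lemma isBounded_support_sawtoothSlice (hFb : Bornology.IsBounded F) (ha : 0 < a) :
    Bornology.IsBounded (Function.support (sawtoothSlice F a h v s)) :=
  hFb.thickening.subset (support_sawtoothSlice_subset ha)

lemma integrable_sawtoothSlice (hFb : Bornology.IsBounded F) (ha : 0 < a) (hM : 0 ≤ M)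
    (hv : sawtooth F a h ⊆ tameSet v M) : Integrable (sawtoothSlice F a h v s) :=
  integrable_of_forall_abs_le_of_isBounded_support
    (measurable_sawtoothSlice (continuousOn_of_subset_tameSet hv) s)
    (abs_sawtoothSlice_le hM hv s) (isBounded_support_sawtoothSlice hFb ha)

lemma contDiffAt_sawtoothExcess (hF : MeasurableSet F) (hFb : Bornology.IsBounded F) (ha : 0 < a)
    (hM : 0 ≤ M) (hv : sawtooth F a h ⊆ tameSet v M) (hp : p ∈ upperHS d)
    (hps : p + (0, s) ∈ sawtooth F a h) : ContDiffAt ℝ 2 (sawtoothExcess F a h M v s) p :=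
  ((hv hps).1.comp p (by fun_prop)).sub
    ((contDiffAt_poissonIntegral (integrable_sawtoothSlice hFb ha hM hv)
      (isBounded_support_sawtoothSlice hFb ha) hp).add (contDiffAt_sawtoothBarrier hF hFb hp))

lemma lapE_sawtoothExcess_pos (hF : MeasurableSet F) (hFb : Bornology.IsBounded F) (ha : 0 < a)
    (hM : 0 < M) (hv : sawtooth F a h ⊆ tameSet v M) (hp : p ∈ upperHS d)
    (hps : p + (0, s) ∈ sawtooth F a h) : 0 < lapE (sawtoothExcess F a h M v s) p := by
  have hint := integrable_sawtoothSlice (s := s) hFb ha hM.le hv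
  have hsupp := isBounded_support_sawtoothSlice (h := h) (v := v) (s := s) hFb ha
  have hP := contDiffAt_poissonIntegral hint hsupp hp
  have hB := contDiffAt_sawtoothBarrier (a := a) (h := h) (M := M) hF hFb hp
  have hshift : ContDiffAt ℝ 2 (fun q => v (q + (0, s))) p := (hv hps).1.comp p (by fun_prop)
  rw [sawtoothExcess, lapE_sub (g := _ + _) hshift (hP.add hB), lapE_add hP hB,
    lapE_poissonIntegral hint hsupp hp, lapE_sawtoothBarrier hF hFb hp, lapE_comp_add_right]
  linarith [(abs_le.1 (hv hps).2.2).1]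

lemma sawtoothExcess_nonpos_of_mem_closure (hF : MeasurableSet F) (ha : 0 < a) (hM : 0 ≤ M)
    (hv : sawtooth F a h ⊆ tameSet v M) (hp : p ∈ upperHS d)
    (hcl : p ∈ closure (sawtooth F a (h / 2))) (hnot : p ∉ sawtooth F a (h / 2))
    (hps : p + (0, s) ∈ sawtooth F a h) : sawtoothExcess F a h M v s p ≤ 0 := by
  have hbarrier := two_mul_le_sawtoothBarrier hF ha hM hp hcl hnot
  have hvM := (abs_le.1 (hv hps).2.1).2
  have hP := (abs_le.1 (abs_poissonIntegral_le (abs_sawtoothSlice_le hM hv s) hp)).1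
  simp only [sawtoothExcess, Pi.sub_apply, Pi.add_apply]
  linarith

lemma eventually_sawtoothExcess_lt_of_height_eq_zero {z : Ed d} (ha : 0 < a) (hM : 0 ≤ M)
    (hv : sawtooth F a h ⊆ tameSet v M) (hz : (z, s) ∈ sawtooth F a h) {B : ℝ} (hB : 0 < B) :
    ∀ᶠ q in 𝓝[sawtooth F a (h / 2)] (z, 0), sawtoothExcess F a h M v s q < B := by
  have hslice : sawtoothSlice F a h v s z = v (z, s) := Set.indicator_of_mem hz v
  have hP := tendsto_poissonIntegral_of_continuousAt (abs_sawtoothSlice_le hM hv s)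
    (measurable_sawtoothSlice (continuousOn_of_subset_tameSet hv) s)
    (continuousAt_sawtoothSlice hz (hv hz).1.continuousAt)
  have hshift : Tendsto (fun q : Ed d × ℝ => v (q + (0, s))) (𝓝[upperHS d] (z, 0))
      (𝓝 (v (z, s))) := by
    have hadd : Tendsto (fun q : Ed d × ℝ => q + (0, s)) (𝓝 (z, 0)) (𝓝 (z, s)) := by
      simpa using (continuous_add_const ((0 : Ed d), s)).tendsto (z, (0 : ℝ))
    exact ((hv hz).1.continuousAt.tendsto.comp hadd).mono_left nhdsWithin_le_nhds
  have hdiff := hshift.sub hP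
  rw [hslice, sub_self] at hdiff
  filter_upwards [(hdiff.mono_left (nhdsWithin_mono _ sawtooth_subset_upperHS)).eventually
    (gt_mem_nhds hB), self_mem_nhdsWithin] with q hq hqs
  obtain ⟨hq₀, hqh, -⟩ := mem_sawtooth.1 hqs
  have hbarrier := sawtoothBarrier_nonneg (F := F) ha hM hq₀ (by linarith : q.2 ≤ h)
  simp only [sawtoothExcess, Pi.sub_apply, Pi.add_apply]
  linarith

lemma sawtoothExcess_nonpos (hF : MeasurableSet F) (hFb : Bornology.IsBounded F) (ha : 0 < a)
    (hM : 0 < M) (hv : sawtooth F a h ⊆ tameSet v M) (hs : 0 < s) (hsh : s < h / 2)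
    (hp : p ∈ sawtooth F a (h / 2)) : sawtoothExcess F a h M v s p ≤ 0 := by
  have hadd {q : Ed d × ℝ} (hq : q ∈ closure (sawtooth F a (h / 2))) :
      q + (0, s) ∈ sawtooth F a h := add_height_mem_sawtooth ha hs (by linarith) hq
  have hC {q : Ed d × ℝ} (hq : q ∈ closure (sawtooth F a (h / 2))) (hq₀ : q ∈ upperHS d) :=
    contDiffAt_sawtoothExcess hF hFb ha hM.le hv hq₀ (hadd hq)
  refine le_of_lapE_pos (isOpen_sawtooth F a (h / 2))
    ((hFb.thickening.prod (isBounded_Ioo 0 (h / 2))).subset (sawtooth_subset_prod ha))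
    (fun q hq => (hC (subset_closure hq) (sawtooth_subset_upperHS hq)).contDiffWithinAt)
    (fun q hq => lapE_sawtoothExcess_pos hF hFb ha hM hv (sawtooth_subset_upperHS hq)
      (hadd (subset_closure hq))) ?_ hp
  rintro ⟨z, y⟩ ⟨hcl, hnot⟩ B hB
  rcases (closure_sawtooth_subset hcl).1.lt_or_eq with hy | hy
  · have hle := sawtoothExcess_nonpos_of_mem_closure hF ha hM.le hv hy hcl hnot (hadd hcl)
    exact ((hC hcl hy).continuousAt.eventually
      (gt_mem_nhds (hle.trans_lt hB))).filter_mono nhdsWithin_le_nhds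
  · obtain rfl : 0 = y := hy
    exact eventually_sawtoothExcess_lt_of_height_eq_zero ha hM.le hv (by simpa using hadd hcl) hB

lemma sawtoothSlice_neg : sawtoothSlice F a h (-v) s = -sawtoothSlice F a h v s := by
  ext t
  exact congrFun (Set.indicator_neg' (sawtooth F a h) v) (t, s)

lemma poissonIntegral_neg (φ : Ed d → ℝ) : poissonIntegral (-φ) = -poissonIntegral φ := by
  ext p
  simp only [poissonIntegral, horizontalConv, Pi.neg_apply, neg_smul, integral_neg]

lemma abs_sub_poissonIntegral_sawtoothSlice_le (hF : MeasurableSet F)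
    (hFb : Bornology.IsBounded F) (ha : 0 < a) (hM : 0 < M) (hv : sawtooth F a h ⊆ tameSet v M)
    (hs : 0 < s) (hsh : s < h / 2) (hp : p ∈ sawtooth F a (h / 2)) :
    |v (p + (0, s)) - poissonIntegral (sawtoothSlice F a h v s) p| ≤
      sawtoothBarrier F a h M p := by
  have hupper := sawtoothExcess_nonpos hF hFb ha hM hv hs hsh hp
  have hlower := sawtoothExcess_nonpos hF hFb ha hM (hv.trans (tameSet_subset_tameSet_neg v M))
    hs hsh hp
  simp only [sawtoothExcess, sawtoothSlice_neg, poissonIntegral_neg, Pi.sub_apply, Pi.add_apply,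
    Pi.neg_apply] at hupper hlower
  rw [abs_le]
  constructor <;> linarith

end Comparison

/-! ### Weak limits -/

section WeakLimit

variable {ι : Type*} (l : Ultrafilter ι)

lemma exists_tendsto_inner_of_forall_norm_le {H : Type*} [NormedAddCommGroup H]
    [InnerProductSpace ℝ H] [CompleteSpace H] {f : ι → H} {B : ℝ} (hB : ∀ i, ‖f i‖ ≤ B) :
    ∃ g : H, ∀ z, Tendsto (fun i => ⟪f i, z⟫) l (𝓝 ⟪g, z⟫) := by
  let T (i : ι) : WeakDual ℝ H := StrongDual.toWeakDual (InnerProductSpace.toDual ℝ H (f i))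
  have hT (i : ι) : T i ∈ WeakDual.toStrongDual ⁻¹' closedBall (0 : StrongDual ℝ H) B :=
    mem_closedBall_zero_iff.2 (((InnerProductSpace.toDual ℝ H).norm_map (f i)).le.trans (hB i))
  obtain ⟨Λ, -, hΛ⟩ := (WeakDual.isCompact_closedBall
    (0 : StrongDual ℝ H) B).ultrafilter_le_nhds (l.map T)
      (le_principal_iff.2 (mem_map.2 (Eventually.of_forall hT)))
  refine ⟨(InnerProductSpace.toDual ℝ H).symm (WeakDual.toStrongDual Λ), fun z => ?_⟩
  rw [InnerProductSpace.toDual_symm_apply]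
  exact ((WeakDual.eval_continuous z).tendsto Λ).comp hΛ

lemma exists_tendsto_integral_mul_of_forall_abs_le {α : Type*} [MeasurableSpace α]
    (μ : Measure α) [IsFiniteMeasure μ] {φ : ι → α → ℝ} {C : ℝ}
    (hφ : ∀ i, AEStronglyMeasurable (φ i) μ) (hC : ∀ i t, |φ i t| ≤ C) :
    ∃ ψ : α → ℝ, Integrable ψ μ ∧ ∀ g : α → ℝ, MemLp g 2 μ →
      Tendsto (fun i => ∫ t, φ i t * g t ∂μ) l (𝓝 (∫ t, ψ t * g t ∂μ)) := by
  have hLp (i : ι) : MemLp (φ i) 2 μ := MemLp.of_bound (hφ i) C (.of_forall (hC i))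
  have hbound (i : ι) : ‖(hLp i).toLp‖ ≤ μ.real Set.univ ^ (2 : ENNReal).toReal⁻¹ * max C 0 := by
    refine Lp.norm_le_of_ae_bound (le_max_right C 0) ?_
    filter_upwards [(hLp i).coeFn_toLp] with t ht
    rw [ht]
    exact (hC i t).trans (le_max_left C 0)
  obtain ⟨ψ, hψ⟩ := exists_tendsto_inner_of_forall_norm_le l hbound
  refine ⟨ψ, (Lp.memLp ψ).integrable one_le_two, fun g hg => ?_⟩
  have hinner (f : Lp ℝ 2 μ) : ⟪f, hg.toLp⟫ = ∫ t, f t * g t ∂μ := by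
    rw [L2.inner_def]
    refine integral_congr_ae ?_
    filter_upwards [hg.coeFn_toLp] with t ht
    rw [ht, real_inner_comm, RCLike.inner_apply, conj_trivial, mul_comm]
  rw [← hinner]
  refine (hψ hg.toLp).congr fun i => (hinner _).trans (integral_congr_ae ?_)
  filter_upwards [(hLp i).coeFn_toLp] with t ht
  rw [ht]

lemma exists_tendsto_poissonIntegral {d : ℕ} {K : Set (Ed d)} (hK : Bornology.IsBounded K)
    {φ : ι → Ed d → ℝ} {C : ℝ} (hφ : ∀ i, Measurable (φ i)) (hC : ∀ i t, |φ i t| ≤ C)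
    (hsupp : ∀ i, Function.support (φ i) ⊆ K) :
    ∃ ψ, Integrable ψ ∧ ∀ p ∈ upperHS d,
      Tendsto (fun i => poissonIntegral (φ i) p) l (𝓝 (poissonIntegral ψ p)) := by
  have hcpt : IsCompact (closure K) := hK.isCompact_closure
  have : IsFiniteMeasure (volume.restrict (closure K)) := ⟨by
    simpa only [Measure.restrict_apply_univ] using hcpt.measure_lt_top⟩
  obtain ⟨ψ, hψint, hψ⟩ := exists_tendsto_integral_mul_of_forall_abs_le l
    (volume.restrict (closure K)) (fun i => (hφ i).aestronglyMeasurable) hC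
  refine ⟨(closure K).indicator ψ,
    (integrable_indicator_iff isClosed_closure.measurableSet).2 hψint, fun p hp => ?_⟩
  have hcont : Continuous fun t : Ed d => poissonKernelHS d (p - (t, 0)) :=
    (contDiffOn_poissonKernelHS d 0).continuousOn.comp_continuous (by fun_prop)
      fun t => sub_mem_upperHS hp t
  have hg : MemLp (fun t : Ed d => poissonKernelHS d (p - (t, 0))) 2
      (volume.restrict (closure K)) := by
    obtain ⟨B, hB⟩ := hcpt.exists_bound_of_continuousOn hcont.continuousOn
    exact MemLp.of_bound hcont.aestronglyMeasurable B
      ((ae_restrict_mem isClosed_closure.measurableSet).mono hB)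
  have hset (f : Ed d → ℝ) (hf : Function.support f ⊆ closure K) :
      ∫ t in closure K, f t * poissonKernelHS d (p - (t, 0)) = poissonIntegral f p :=
    setIntegral_eq_integral_of_forall_compl_eq_zero fun t ht => by
      rw [Function.notMem_support.1 fun h => ht (hf h), zero_mul]
  rw [← hset _ Set.support_indicator_subset]
  simp only [← hset _ ((hsupp _).trans subset_closure)]
  convert hψ _ hg using 2
  exact setIntegral_congr_fun isClosed_closure.measurableSet fun t ht => by
    rw [Set.indicator_of_mem ht]

end WeakLimit

/-! ### A local Fatou theorem -/

section LocalFatou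

variable {d : ℕ} {F : Set (Ed d)} {a h M : ℝ} {v : Ed d × ℝ → ℝ} {x : Ed d}

lemma exists_abs_sub_poissonIntegral_le_sawtoothBarrier (hF : MeasurableSet F)
    (hFb : Bornology.IsBounded F) (ha : 0 < a) (hM : 0 < M)
    (hv : sawtooth F a h ⊆ tameSet v M) :
    ∃ φ, Integrable φ ∧ ∀ p ∈ sawtooth F a (h / 2),
      |v p - poissonIntegral φ p| ≤ sawtoothBarrier F a h M p := by
  let l : Ultrafilter ℝ := Ultrafilter.of (𝓝[>] 0)
  have hl : ↑l ≤ 𝓝[>] (0 : ℝ) := Ultrafilter.of_le _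
  obtain ⟨φ, hφint, hφ⟩ := exists_tendsto_poissonIntegral l (hFb.thickening (δ := a * h))
    (measurable_sawtoothSlice (continuousOn_of_subset_tameSet hv)) (abs_sawtoothSlice_le hM.le hv)
    (fun _ => support_sawtoothSlice_subset ha)
  refine ⟨φ, hφint, fun p hp => ?_⟩
  obtain ⟨hp₀, hph, -⟩ := mem_sawtooth.1 hp
  have hvp : ContinuousAt v p := (hv (sawtooth_mono_height (by linarith) hp)).1.continuousAt
  have hshift : Tendsto (fun s : ℝ => p + ((0 : Ed d), s)) (𝓝 0) (𝓝 p) := by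
    have hcont : Continuous fun s : ℝ => p + ((0 : Ed d), s) := by fun_prop
    simpa only [Prod.mk_zero_zero, add_zero] using hcont.tendsto 0
  have hlower := (hvp.tendsto.comp hshift).mono_left (hl.trans nhdsWithin_le_nhds)
  refine le_of_tendsto (hlower.sub (hφ p hp₀)).abs (hl ?_)
  filter_upwards [Ioo_mem_nhdsGT (show (0 : ℝ) < h / 2 by linarith)] with s hs
  exact abs_sub_poissonIntegral_sawtoothSlice_le hF hFb ha hM hv hs.1 hs.2 hp

lemma tendsto_sawtoothBarrier {l : Filter (Ed d × ℝ)} (hl : l ≤ 𝓝 (x, 0))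
    (hP : Tendsto (poissonIntegral ((collar F a h).indicator 1)) l (𝓝 0)) :
    Tendsto (sawtoothBarrier F a h M) l (𝓝 0) := by
  have hcont : Continuous fun p : Ed d × ℝ => 4 * M / h * p.2 + M * (p.2 * (h - p.2)) := by
    fun_prop
  have hadd := (hP.const_mul (2 * M / poissonBallMass d a)).add
    ((hcont.tendsto (x, 0)).mono_left hl)
  simp only [mul_zero, zero_mul, add_zero] at hadd
  exact hadd

lemma eventually_mem_sawtooth (hF : MeasurableSet F) (ha : 0 < a) (hh : 0 < h) (hx : x ∈ F)
    {l : Filter (Ed d × ℝ)} (hl : l ≤ 𝓝[upperHS d] (x, 0))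
    (hP : Tendsto (poissonIntegral ((collar F a h).indicator 1)) l (𝓝 0)) {h' : ℝ} (hh' : 0 < h') :
    ∀ᶠ p in l, p ∈ sawtooth F a h' := by
  have hlnhds : l ≤ 𝓝 (x, 0) := hl.trans nhdsWithin_le_nhds
  have hheight : ∀ᶠ p in l, p.2 < h' :=
    hlnhds ((continuous_snd.tendsto (x, (0 : ℝ))).eventually (gt_mem_nhds hh'))
  have hnear : ∀ᶠ p in l, dist p.1 x + a * p.2 < a * h := by
    have hcont : Continuous fun p : Ed d × ℝ => dist p.1 x + a * p.2 := by fun_prop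
    have hlim := hcont.tendsto (x, 0)
    simp only [dist_self, mul_zero, add_zero] at hlim
    exact hlnhds (hlim.eventually (gt_mem_nhds (mul_pos ha hh)))
  filter_upwards [hl self_mem_nhdsWithin, hheight, hnear,
    hP.eventually (gt_mem_nhds (poissonBallMass_pos d ha))] with p hp hph hpx hpP
  refine mem_sawtooth.2 ⟨hp, hph, ?_⟩
  by_contra hnot
  refine hpP.not_ge (poissonBallMass_le_collar hF hp hnot ?_)
  intro t ht
  refine mem_thickening_iff.2 ⟨x, hx, ?_⟩
  linarith [dist_triangle t p.1 x, mem_ball.1 ht]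

lemma cone_subset_upperHS (a : ℝ) (x : Ed d) : cone a x ⊆ upperHS d := fun _ hp => hp.1

lemma ae_hasNTLimit_of_sawtooth_subset_tameSet (hF : MeasurableSet F)
    (hFb : Bornology.IsBounded F) (ha : 0 < a) (hh : 0 < h) (hM : 0 < M)
    (hv : sawtooth F a h ⊆ tameSet v M) : ∀ᵐ x, x ∈ F → HasNTLimit v x := by
  obtain ⟨φ, hφint, hφ⟩ :=
    exists_abs_sub_poissonIntegral_le_sawtoothBarrier hF hFb ha hM hv
  filter_upwards [ae_forall_tendsto_poissonIntegral hφint,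
    ae_forall_tendsto_poissonIntegral (integrable_collar_indicator (a := a) (h := h) hF hFb)]
    with x hφx hcollar hx A _
  have hP := hcollar A
  rw [Set.indicator_of_notMem (fun hx' => hx'.2 hx)] at hP
  have hdiff : Tendsto (fun p => v p - poissonIntegral φ p) (𝓝[cone A x] (x, 0)) (𝓝 0) := by
    refine squeeze_zero_norm' ?_ (tendsto_sawtoothBarrier (M := M) nhdsWithin_le_nhds hP)
    exact (eventually_mem_sawtooth hF ha hh hx (nhdsWithin_mono _ (cone_subset_upperHS A x)) hP
      (half_pos hh)).mono hφ
  exact ⟨φ x, by simpa using hdiff.add (hφx A)⟩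

lemma hasBasis_nhdsWithin_cone (ha : 0 < a) (x : Ed d) :
    (𝓝[cone a x] (x, (0 : ℝ))).HasBasis (fun h : ℝ => 0 < h) fun h => coneT a h x := by
  refine nhdsWithin_hasBasis nhds_basis_ball _ |>.to_hasBasis (fun ε hε => ?_) fun h hh => ?_
  · refine ⟨min ε (ε / a), by positivity, fun p ⟨hp₀, hph, hpx⟩ => ⟨?_, hp₀, hpx⟩⟩
    obtain ⟨hpε, hpε'⟩ := lt_min_iff.1 hph
    rw [lt_div_iff₀' ha] at hpε'
    rw [mem_ball, Prod.dist_eq, max_lt_iff, Real.dist_0_eq_abs, abs_of_pos hp₀]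
    exact ⟨hpx.trans hpε', hpε⟩
  · refine ⟨h, hh, fun p ⟨hpb, hp₀, hpx⟩ => ⟨hp₀, ?_, hpx⟩⟩
    have hlt := (le_max_right _ _).trans_lt (mem_ball.1 hpb)
    rwa [Real.dist_0_eq_abs, abs_of_pos hp₀] at hlt

lemma coneT_mono {a' h' : ℝ} (ha : a ≤ a') (hh : h ≤ h') (x : Ed d) :
    coneT a h x ⊆ coneT a' h' x := fun _ ⟨hp₀, hph, hpx⟩ =>
  ⟨hp₀, hph.trans_le hh, hpx.trans_le (by gcongr)⟩

lemma tameSet_mono {M' : ℝ} (hM : M ≤ M') : tameSet v M ⊆ tameSet v M' :=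
  fun _ ⟨hC, hv, hlap⟩ => ⟨hC, hv.trans hM, hlap.trans hM⟩

lemma ae_hasNTLimit_of_coneT_subset_tameSet (v : Ed d × ℝ → ℝ) :
    ∀ᵐ x, (∃ a > 0, ∃ h > 0, ∃ M, coneT a h x ⊆ tameSet v M) → HasNTLimit v x := by
  let δ (n : ℕ) : ℝ := 1 / (n + 1)
  have hδ (n : ℕ) : 0 < δ n := Nat.one_div_pos_of_nat
  let S (n : ℕ) : Set (Ed d) := {x | ‖x‖ ≤ n ∧ coneT (δ n) (δ n) x ⊆ tameSet v (n + 1)}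
  have hSb (n : ℕ) : Bornology.IsBounded (closure (S n)) :=
    (isBounded_iff_forall_norm_le.2 ⟨n, fun _ hx => hx.1⟩).closure
  have hsub (n : ℕ) : sawtooth (closure (S n)) (δ n) (δ n) ⊆ tameSet v (n + 1) := by
    intro p hp
    rw [mem_sawtooth, thickening_closure, ← mem_sawtooth] at hp
    obtain ⟨x, hx, hpx⟩ := Set.mem_iUnion₂.1 hp
    exact hx.2 hpx
  have hae := ae_all_iff.2 fun n => ae_hasNTLimit_of_sawtooth_subset_tameSet
    isClosed_closure.measurableSet (hSb n) (hδ n) (hδ n) n.cast_add_one_pos (hsub n)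
  filter_upwards [hae] with x hx ⟨a, ha, h, hh, M, hM⟩
  have hδlim : Tendsto δ atTop (𝓝 0) := tendsto_one_div_add_atTop_nhds_zero_nat
  obtain ⟨n, hna, hnh, hnM, hnx⟩ := ((hδlim.eventually (ge_mem_nhds ha)).and
    ((hδlim.eventually (ge_mem_nhds hh)).and
      ((tendsto_natCast_atTop_atTop.eventually_ge_atTop M).and
        (tendsto_natCast_atTop_atTop.eventually_ge_atTop ‖x‖)))).exists
  exact hx n (subset_closure
    ⟨hnx, ((coneT_mono hna hnh x).trans hM).trans (tameSet_mono (by linarith))⟩)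

lemma ae_hasNTLimit_of_isBigO (v : Ed d × ℝ → ℝ) : ∀ᵐ x, ∀ a > 0,
    (∀ᶠ p in 𝓝[cone a x] (x, (0 : ℝ)), ContDiffAt ℝ 2 v p) →
    v =O[𝓝[cone a x] (x, (0 : ℝ))] (1 : Ed d × ℝ → ℝ) →
    lapE v =O[𝓝[cone a x] (x, (0 : ℝ))] (1 : Ed d × ℝ → ℝ) → HasNTLimit v x := by
  filter_upwards [ae_hasNTLimit_of_coneT_subset_tameSet v] with x hx a ha hC hv hlap
  obtain ⟨M, hM⟩ := hv.bound
  obtain ⟨M', hM'⟩ := hlap.bound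
  obtain ⟨h, hh, htame⟩ := (hasBasis_nhdsWithin_cone ha x).eventually_iff.1 (hC.and (hM.and hM'))
  refine hx ⟨a, ha, h, hh, max M M', fun p hp => ?_⟩
  obtain ⟨hCp, hMp, hMp'⟩ := htame hp
  simp only [Pi.one_apply, norm_one, mul_one, Real.norm_eq_abs] at hMp hMp'
  exact ⟨hCp, hMp.trans (le_max_left _ _), hMp'.trans (le_max_right _ _)⟩

end LocalFatou

/-! ### The Dunkl weight -/

section DunklWeight

variable {d : ℕ} {Rp : Finset (Ed d)} {κ : Ed d → ℝ} {u w : Ed d × ℝ → ℝ} {p : Ed d × ℝ}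
  {x : Ed d}

/-- The square root `∏ |⟨α,x⟩|^κ(α)` of the Dunkl weight, as a function of `(x,y)`. It is written
with `Real.log`, which is the logarithm of the absolute value. -/
def sqrtDunklWeight (Rp : Finset (Ed d)) (κ : Ed d → ℝ) (p : Ed d × ℝ) : ℝ :=
  Real.exp (∑ α ∈ Rp, κ α * Real.log ⟪α, p.1⟫)

lemma sqrtDunklWeight_ne_zero (p : Ed d × ℝ) : sqrtDunklWeight Rp κ p ≠ 0 := (Real.exp_pos _).ne'

lemma contDiffAt_sqrtDunklWeight (hp : ∀ α ∈ Rp, ⟪α, p.1⟫ ≠ 0) :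
    ContDiffAt ℝ 2 (sqrtDunklWeight Rp κ) p :=
  .exp (.sum fun α hα =>
    contDiffAt_const.mul ((contDiffAt_const.inner ℝ contDiffAt_fst).log (hp α hα)))

lemma fderiv_sqrtDunklWeight_apply (hp : ∀ α ∈ Rp, ⟪α, p.1⟫ ≠ 0) (v : Ed d × ℝ) :
    fderiv ℝ (sqrtDunklWeight Rp κ) p v =
      sqrtDunklWeight Rp κ p * ∑ α ∈ Rp, κ α / ⟪α, p.1⟫ * ⟪α, v.1⟫ := by
  have hinner (α : Ed d) : HasFDerivAt (fun q : Ed d × ℝ => ⟪α, q.1⟫)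
      ((innerSL ℝ α).comp (ContinuousLinearMap.fst ℝ (Ed d) ℝ)) p :=
    (innerSL ℝ α).hasFDerivAt.comp p hasFDerivAt_fst
  have hweight : HasFDerivAt (sqrtDunklWeight Rp κ) _ p :=
    (HasFDerivAt.fun_sum fun α hα => ((hinner α).log (hp α hα)).const_mul (κ α)).exp
  rw [hweight.fderiv]
  simp [sqrtDunklWeight, div_eq_mul_inv, mul_assoc]

lemma fderiv_apply_prodMk_zero (f : Ed d × ℝ → ℝ) (p : Ed d × ℝ) (α : Ed d) :
    fderiv ℝ f p (α, 0) =
      ∑ i, ⟪α, EuclideanSpace.single i (1 : ℝ)⟫ * fderiv ℝ f p (EuclideanSpace.single i 1, 0) := by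
  have hα := congrArg (fun z => (fderiv ℝ f p).comp (.inl ℝ (Ed d) ℝ) z)
    ((EuclideanSpace.basisFun (Fin d) ℝ).sum_repr α)
  simpa [EuclideanSpace.inner_single_right] using hα.symm

lemma gradDot_sqrtDunklWeight (hp : ∀ α ∈ Rp, ⟪α, p.1⟫ ≠ 0) (u : Ed d × ℝ → ℝ) :
    gradDot (sqrtDunklWeight Rp κ) u p =
      sqrtDunklWeight Rp κ p * ∑ α ∈ Rp, κ α * (fderiv ℝ u p (α, 0) / ⟪α, p.1⟫) := by
  have hcoord (α : Ed d) : κ α * (fderiv ℝ u p (α, 0) / ⟪α, p.1⟫) =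
      ∑ i, κ α / ⟪α, p.1⟫ * ⟪α, EuclideanSpace.single i (1 : ℝ)⟫ *
        fderiv ℝ u p (EuclideanSpace.single i 1, 0) := by
    rw [fderiv_apply_prodMk_zero u p α, Finset.sum_div, Finset.mul_sum]
    exact Finset.sum_congr rfl fun i _ => by ring
  rw [Finset.sum_congr rfl fun α _ => hcoord α, Finset.sum_comm, Finset.mul_sum]
  simp only [gradDot, fderiv_sqrtDunklWeight_apply hp, inner_zero_right, mul_zero,
    Finset.sum_const_zero, zero_mul, add_zero, mul_assoc, Finset.sum_mul]

lemma lapE_sqrtDunklWeight_mul (hp : ∀ α ∈ Rp, ⟪α, p.1⟫ ≠ 0) (hu : ContDiffAt ℝ 2 u p)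
    (hharm : dunklLap Rp κ u p = 0) :
    lapE (sqrtDunklWeight Rp κ * u) p =
      sqrtDunklWeight Rp κ p *
          (2 * ∑ α ∈ Rp, κ α * ((u p - u (reflAt α p.1, p.2)) / ⟪α, p.1⟫ ^ 2)) +
        u p * lapE (sqrtDunklWeight Rp κ) p := by
  rw [lapE_mul (contDiffAt_sqrtDunklWeight hp) hu, gradDot_sqrtDunklWeight hp]
  simp only [dunklLap, mul_sub, Finset.sum_sub_distrib] at hharm
  linear_combination sqrtDunklWeight Rp κ p * hharm

lemma isBigO_lapE_sqrtDunklWeight_mul {l : Filter (Ed d × ℝ)} (hl : l ≤ 𝓝 p)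
    (hp : ∀ α ∈ Rp, ⟪α, p.1⟫ ≠ 0) (hC : ∀ᶠ q in l, ContDiffAt ℝ 2 u q)
    (hharm : ∀ᶠ q in l, dunklLap Rp κ u q = 0) (hu : u =O[l] (1 : Ed d × ℝ → ℝ))
    (hrefl : ∀ α ∈ Rp, (fun q => u (reflAt α q.1, q.2)) =O[l] (1 : Ed d × ℝ → ℝ)) :
    lapE (sqrtDunklWeight Rp κ * u) =O[l] (1 : Ed d × ℝ → ℝ) := by
  have hbdd {f : Ed d × ℝ → ℝ} (hf : ContinuousAt f p) : f =O[l] (1 : Ed d × ℝ → ℝ) :=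
    (hf.tendsto.isBigO_one ℝ).mono hl
  have hinner (α : Ed d) : Continuous fun q : Ed d × ℝ => ⟪α, q.1⟫ := by fun_prop
  have hoff : ∀ᶠ q in l, ∀ α ∈ Rp, ⟪α, q.1⟫ ≠ 0 := hl <| (eventually_all_finset Rp).2
    fun α hα => (hinner α).continuousAt.eventually_ne (hp α hα)
  have hw := contDiffAt_sqrtDunklWeight (κ := κ) hp
  have hdiff (α : Ed d) (hα : α ∈ Rp) :
      (fun q => (u q - u (reflAt α q.1, q.2)) / ⟪α, q.1⟫ ^ 2) =O[l] (1 : Ed d × ℝ → ℝ) := by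
    have hinv : (fun q : Ed d × ℝ => (⟪α, q.1⟫ ^ 2)⁻¹) =O[l] (1 : Ed d × ℝ → ℝ) :=
      hbdd (((hinner α).pow 2).continuousAt.inv₀ (pow_ne_zero 2 (hp α hα)))
    simp only [div_eq_mul_inv]
    exact ((hu.sub (hrefl α hα)).mul hinv).congr_right fun _ => one_mul 1
  have hsum : (fun q => 2 * ∑ α ∈ Rp, κ α * ((u q - u (reflAt α q.1, q.2)) / ⟪α, q.1⟫ ^ 2))
      =O[l] (1 : Ed d × ℝ → ℝ) :=
    (Asymptotics.IsBigO.fun_sum fun α hα => (hdiff α hα).const_mul_left (κ α)).const_mul_left 2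
  have hbound := (((hbdd hw.continuousAt).mul hsum).add
    (hu.mul (hbdd (continuousAt_lapE hw)))).congr_right fun _ => one_mul 1
  refine hbound.congr' ?_ .rfl
  filter_upwards [hoff, hC, hharm] with q hq hqC hqharm
  exact (lapE_sqrtDunklWeight_mul hq hqC hqharm).symm

lemma HasNTLimit.of_mul (h : HasNTLimit (w * u) x) (hw : ContinuousAt w (x, 0))
    (hw₀ : w (x, 0) ≠ 0) : HasNTLimit u x := by
  intro a ha
  obtain ⟨L, hL⟩ := h a ha
  have hwcone := hw.mono_left (nhdsWithin_le_nhds (s := cone a x))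
  refine ⟨L / w (x, 0), (hL.div hwcone hw₀).congr' ?_⟩
  filter_upwards [hwcone.eventually_ne hw₀] with p hp
  exact mul_div_cancel_left₀ (u p) hp

end DunklWeight

/-! ### Reflections -/

section Reflections

variable {d : ℕ} {R : Finset (Ed d)} {u : Ed d × ℝ → ℝ} {x α : Ed d}

lemma reflAt_eq_reflection (hα : ⟪α, α⟫ = (2 : ℝ)) (x : Ed d) :
    reflAt α x = (ℝ ∙ α)ᗮ.reflection x := by
  have hnorm : ‖α‖ ^ 2 = 2 := by rw [← real_inner_self_eq_norm_sq, hα]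
  rw [reflAt, Submodule.reflection_orthogonal_apply, Submodule.reflection_singleton_apply]
  simp only [Real.ringHom_apply, hnorm, neg_sub, sub_right_inj]
  rw [two_smul, ← add_smul, add_halves]

lemma ae_isRegular (hR : ∀ α ∈ R, α ≠ 0) : ∀ᵐ x, isRegular R x := by
  refine (ae_ball_iff R.countable_toSet).2 fun α hα => ?_
  have hproper : (ℝ ∙ α)ᗮ ≠ ⊤ := by simpa using hR α hα
  filter_upwards [measure_eq_zero_iff_ae_notMem.1
    (Measure.addHaar_submodule volume (ℝ ∙ α)ᗮ hproper)] with x hx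
  exact fun h => hx (Submodule.mem_orthogonal_singleton_iff_inner_right.2 h)

lemma eventually_isRegular (hx : isRegular R x) : ∀ᶠ z in 𝓝 x, isRegular R z :=
  (eventually_all_finset R).2 fun α hα =>
    ContinuousAt.eventually_ne (g := fun z : Ed d => ⟪α, z⟫) (by fun_prop) (hx α hα)

lemma NTBounded.eventually_isBigO (h : NTBounded u x) :
    ∀ᶠ a in 𝓝[>] (0 : ℝ), u =O[𝓝[cone a x] (x, 0)] (1 : Ed d × ℝ → ℝ) := by
  obtain ⟨b, hb, h, hh, M, hM⟩ := h
  filter_upwards [Ioo_mem_nhdsGT hb] with a ⟨ha, hab⟩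
  refine .of_bound M (mem_of_superset ((hasBasis_nhdsWithin_cone ha x).mem_of_mem hh) ?_)
  intro p hp
  simpa using hM p (coneT_mono hab.le le_rfl x hp)

lemma NTBounded.comp_reflAt (hα : ⟪α, α⟫ = (2 : ℝ)) (h : NTBounded u (reflAt α x)) :
    NTBounded (fun p => u (reflAt α p.1, p.2)) x := by
  obtain ⟨a, ha, h, hh, M, hM⟩ := h
  refine ⟨a, ha, h, hh, M, fun p ⟨hp₀, hph, hpx⟩ => hM _ ⟨hp₀, hph, ?_⟩⟩
  rwa [reflAt_eq_reflection hα, reflAt_eq_reflection hα, LinearIsometryEquiv.dist_map]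

lemma GInvSet.reflAt_mem {E : Set (Ed d)} (hE : GInvSet R E) (hα : α ∈ R) (hx : x ∈ E) :
    reflAt α x ∈ E := by
  rw [← hE (reflAt α) (Submonoid.subset_closure ⟨α, hα, rfl⟩)]
  exact Set.mem_image_of_mem (reflAt α) hx

end Reflections

theorem dunkl_ntbounded_imp_ntlimit_on_full_subset_general {d : ℕ} {R Rp : Finset (Ed d)}
    {κ : Ed d → ℝ} {u : Ed d × ℝ → ℝ} (hR : ∀ α ∈ R, ⟪α, α⟫ = (2 : ℝ)) (hRp : Rp ⊆ R)
    (hu : KHarmonicOn R Rp κ u (upperHS d)) :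
    ∀ᵐ x, NTBounded u x → (∀ α ∈ Rp, NTBounded u (reflAt α x)) → HasNTLimit u x := by
  have hne (α : Ed d) (hα : α ∈ R) : α ≠ 0 := fun h => by simpa [h] using hR α hα
  filter_upwards [ae_isRegular hne, ae_hasNTLimit_of_isBigO (sqrtDunklWeight Rp κ * u)]
    with x hreg hlim hux hσ
  have hw := contDiffAt_sqrtDunklWeight (κ := κ) (p := (x, 0)) fun α hα => hreg α (hRp hα)
  obtain ⟨a, ⟨hO, hσO⟩, ha⟩ := ((hux.eventually_isBigO.and ((eventually_all_finset Rp).2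
    fun α hα => ((hσ α hα).comp_reflAt (hR α (hRp hα))).eventually_isBigO)).and
      self_mem_nhdsWithin).exists
  have hcone : ∀ᶠ p in 𝓝[cone a x] (x, 0), p ∈ upperHS d ∧ isRegular R p.1 := by
    filter_upwards [self_mem_nhdsWithin, nhdsWithin_le_nhds
      (continuousAt_fst.eventually (eventually_isRegular hreg))] with p hp hpreg
    exact ⟨cone_subset_upperHS a x hp, hpreg⟩
  have huC : ∀ᶠ p in 𝓝[cone a x] (x, 0), ContDiffAt ℝ 2 u p :=
    hcone.mono fun p hp => hu.1.contDiffAt ((isOpen_upperHS d).mem_nhds hp.1)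
  refine (hlim a ha ?_ ?_ ?_).of_mul hw.continuousAt (sqrtDunklWeight_ne_zero _)
  · filter_upwards [hcone, huC] with p hp hpC
    exact (contDiffAt_sqrtDunklWeight fun α hα => hp.2 α (hRp hα)).mul hpC
  · exact (((hw.continuousAt.tendsto.isBigO_one ℝ).mono nhdsWithin_le_nhds).mul hO).congr_right
      fun _ => one_mul 1
  · exact isBigO_lapE_sqrtDunklWeight_mul nhdsWithin_le_nhds (fun α hα => hreg α (hRp hα)) huC
      (hcone.mono fun p hp => hu.2 p hp.1 hp.2) hO hσO

/-- **Theorem 4.1 (local Privalov–Calderón).** If `u` is `κ`-harmonic in `ℝ^{d+1}₊` and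
non-tangentially bounded at `(x,0)` for every `x` in a `G`-invariant measurable set `E`,
then there is a full-measure subset `E₀` of `E` such that for every `a > 0` and every
`x ∈ E₀`, `u(t,y)` has a finite limit as `(t,y) ∈ Γ_a(x)` tends to `(x,0)`. -/
theorem dunkl_ntbounded_imp_ntlimit_on_full_subset
    {d : ℕ} (hd : 1 ≤ d) (R Rp : Finset (Ed d)) (κ : Ed d → ℝ)
    (hRS : IsRootSystem R Rp κ)
    (E : Set (Ed d)) (hEm : MeasurableSet E) (hEinv : GInvSet R E)
    (u : Ed d × ℝ → ℝ) (hu : KHarmonicOn R Rp κ u (upperHS d))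
    (hbdd : ∀ x ∈ E, NTBounded u x) :
    ∃ E₀ ⊆ E, volume (E \ E₀) = 0 ∧
      ∀ x ∈ E₀, ∀ a > (0 : ℝ), ∃ L : ℝ,
        Tendsto u (𝓝[cone a x] (x, (0 : ℝ))) (𝓝 L) := by
  have hlim : ∀ᵐ x, x ∈ E → HasNTLimit u x := by
    filter_upwards [dunkl_ntbounded_imp_ntlimit_on_full_subset_general hRS.norm_two hRS.pos_sub hu]
      with x hx hxE
    exact hx (hbdd x hxE) fun α hα => hbdd _ (hEinv.reflAt_mem (hRS.pos_sub hα) hxE)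
  refine ⟨{x ∈ E | HasNTLimit u x}, Set.sep_subset _ _, ?_, fun x hx => hx.2⟩
  refine measure_mono_null (fun x hx => ?_) (ae_iff.1 hlim)
  exact fun hxlim => hx.2 ⟨hx.1, hxlim hx.1⟩

end
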